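/- There exists a constant C_p > 0 depending only on p such that, whenever N_n ≤ 1, for all t1, t2 ≥ 0 with t1 ≤ 1, t2 ≤ 1 and t1 + t2 ≤ 1, and all x ≤ 0, P( S_n ≤ x · √( t1·⟨S⟩_n + t2·[S]_n + (1 − t1 − t2) ) ) − Φ(x) ≤ C_p · N_n^{1/(2p+1)}. -/

import Mathlib

open MeasureTheory Filter Finset

/-- The standard normal distribution function
`Φ(x) = (2π)^{-1/2} ∫_{-∞}^x e^{-u²/2} du`. -/
noncomputable def stdNormalCDF (x : ℝ) : ℝ :=
  ∫ u in Set.Iic x, (Real.sqrt (2 * Real.pi))⁻¹ * Real.exp (-u ^ 2 / 2)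

namespace BE

/-- standard normal density -/
noncomputable def phi (u : ℝ) : ℝ := (Real.sqrt (2 * Real.pi))⁻¹ * Real.exp (-u ^ 2 / 2)

lemma phi_eq : phi = ProbabilityTheory.gaussianPDFReal 0 1 := by
  funext x; simp [phi, ProbabilityTheory.gaussianPDFReal]

lemma phi_int : Integrable phi := by
  rw [phi_eq]; exact ProbabilityTheory.integrable_gaussianPDFReal 0 1

lemma phi_total : ∫ u, phi u = 1 := by
  rw [phi_eq]; exact ProbabilityTheory.integral_gaussianPDFReal_eq_one 0 one_ne_zero

lemma phi_nonneg (u : ℝ) : 0 ≤ phi u := by unfold phi; positivity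

lemma phi_cont : Continuous phi := by unfold phi; fun_prop

lemma Phi_nonneg (x : ℝ) : 0 ≤ stdNormalCDF x :=
  integral_nonneg (fun u => phi_nonneg u)

lemma Phi_le_one (x : ℝ) : stdNormalCDF x ≤ 1 := by
  rw [← phi_total]
  exact setIntegral_le_integral phi_int (ae_of_all _ phi_nonneg)

lemma Phi_deriv (x : ℝ) : HasDerivAt stdNormalCDF (phi x) x := by
  have h : stdNormalCDF = fun y => (∫ u in (0:ℝ)..y, phi u) + ∫ u in Set.Iic (0:ℝ), phi u := by
    funext y
    rw [← intervalIntegral.integral_Iic_sub_Iic phi_int.integrableOn phi_int.integrableOn]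
    simp only [stdNormalCDF, phi]; ring
  rw [h]
  exact (intervalIntegral.integral_hasDerivAt_right (phi_cont.intervalIntegrable _ _)
    (phi_cont.stronglyMeasurableAtFilter _ _) phi_cont.continuousAt).add_const _

lemma c0_le_one : (Real.sqrt (2 * Real.pi))⁻¹ ≤ 1 := by
  apply inv_le_one_of_one_le₀
  rw [Real.one_le_sqrt]; nlinarith [Real.pi_gt_three]

lemma c0_nonneg : 0 ≤ (Real.sqrt (2 * Real.pi))⁻¹ := by positivity

lemma Phi_tail (z : ℝ) (hz : 0 ≤ z) : 1 - Real.exp (-z ^ 2 / 2) ≤ stdNormalCDF z := by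
  have h1 : stdNormalCDF z + ∫ u in Set.Ioi z, phi u = 1 := by
    rw [← phi_total]
    have := integral_add_compl (μ := volume) (s := Set.Iic z) measurableSet_Iic phi_int
    rw [Set.compl_Iic] at this
    exact this
  have h2 : ∫ u in Set.Ioi z, phi u ≤ ∫ u in Set.Ioi z, Real.exp (-z ^ 2 / 2) * phi (u - z) := by
    apply setIntegral_mono_on phi_int.integrableOn
      (((phi_int.comp_sub_right z).const_mul _).integrableOn) measurableSet_Ioi
    intro u hu
    have hu : z < u := hu
    unfold phi
    rw [mul_left_comm, ← Real.exp_add]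
    gcongr
    nlinarith
  have h3 : ∫ u in Set.Ioi z, Real.exp (-z ^ 2 / 2) * phi (u - z)
      ≤ ∫ u, Real.exp (-z ^ 2 / 2) * phi (u - z) :=
    setIntegral_le_integral ((phi_int.comp_sub_right z).const_mul _)
      (ae_of_all _ fun u => mul_nonneg (Real.exp_pos _).le (phi_nonneg _))
  have h4 : ∫ u, Real.exp (-z ^ 2 / 2) * phi (u - z) = Real.exp (-z ^ 2 / 2) := by
    rw [integral_const_mul, integral_sub_right_eq_self phi z, phi_total, mul_one]
  linarith

lemma phi_le (u : ℝ) : phi u ≤ Real.exp (-u ^ 2 / 2) := by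
  unfold phi
  have := c0_le_one
  have h := Real.exp_pos (-u ^ 2 / 2)
  nlinarith

lemma Phi_scale (x ρ : ℝ) (hx : x ≤ 0) (h0 : 0 < ρ) (h1 : ρ ≤ 1) :
    stdNormalCDF (x * ρ) - stdNormalCDF x ≤ 1 / ρ - 1 := by
  rcases hx.eq_or_lt with rfl | hx
  · simp; exact (one_le_inv₀ h0).2 h1
  have hle : x ≤ x * ρ := by nlinarith
  have hb : ∀ y ∈ Set.Icc x (x * ρ), ‖phi y‖ ≤ Real.exp (-(x * ρ) ^ 2 / 2) := by
    intro y hy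
    rw [Real.norm_of_nonneg (phi_nonneg _)]
    refine (phi_le y).trans (Real.exp_le_exp.2 ?_)
    have : x * ρ ≤ 0 := by nlinarith
    nlinarith [hy.1, hy.2]
  have h := (convex_Icc x (x * ρ)).norm_image_sub_le_of_norm_hasDerivWithin_le
    (f := stdNormalCDF) (f' := phi) (fun y _ => (Phi_deriv y).hasDerivWithinAt) hb
    (Set.left_mem_Icc.2 hle) (Set.right_mem_Icc.2 hle)
  have h2 := (le_abs_self _).trans (h.trans_eq (by rw [Real.norm_of_nonneg (by linarith)]))
  refine h2.trans ?_
  set w := -(x * ρ) with hw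
  have hwp : 0 < w := by rw [hw]; nlinarith
  have hx' : x = - w / ρ := by rw [hw]; field_simp
  have hxx : x * ρ - x = w * (1 / ρ - 1) := by
    rw [hx']; field_simp; ring
  rw [hxx]
  have : Real.exp (-(x * ρ) ^ 2 / 2) * w ≤ 1 := by
    have e1 : -(x*ρ)^2/2 = -(w^2/2) := by rw [hw]; ring
    rw [e1, Real.exp_neg, inv_mul_le_iff₀ (Real.exp_pos _)]
    have := Real.add_one_le_exp (w^2/2)
    nlinarith [sq_nonneg (w-1)]
  have h3 : 0 ≤ 1/ρ - 1 := by
    rw [sub_nonneg]; exact (one_le_div h0).2 h1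
  nlinarith


lemma mvt_aux (f f' : ℝ → ℝ) (a b L : ℝ)
    (h : ∀ y, |y - a| ≤ |b - a| → HasDerivAt f (f' y) y)
    (hL : ∀ y, |y - a| ≤ |b - a| → |f' y| ≤ L) : |f b - f a| ≤ L * |b - a| := by
  have hs : Convex ℝ (Metric.closedBall a |b - a|) := convex_closedBall _ _
  have key := hs.norm_image_sub_le_of_norm_hasDerivWithin_le (f := f) (f' := f') (C := L)
    (x := a) (y := b)
    (fun y hy => (h y (by simpa [Real.dist_eq] using hy)).hasDerivWithinAt)
    (fun y hy => hL y (by simpa [Real.dist_eq] using hy))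
    (by simp) (by simp [Real.dist_eq])
  simpa using key

lemma taylor3 (f f1 f2 f3 : ℝ → ℝ) (h0 : ∀ x, HasDerivAt f (f1 x) x)
    (h1 : ∀ x, HasDerivAt f1 (f2 x) x) (h2 : ∀ x, HasDerivAt f2 (f3 x) x) (z d L : ℝ)
    (hL : ∀ y, |y - z| ≤ |d| → |f3 y| ≤ L) :
    |f (z + d) - f z - d * f1 z - d ^ 2 / 2 * f2 z| ≤ L * |d| ^ 3 := by
  have hL0 : 0 ≤ L := (abs_nonneg _).trans (hL z (by simp))
  have a2 : ∀ y, |y - z| ≤ |d| → |f2 y - f2 z| ≤ L * |d| := by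
    intro y hy
    refine (mvt_aux f2 f3 z y L (fun t _ => h2 t) (fun t ht => hL t (ht.trans hy))).trans ?_
    gcongr
  have a1 : ∀ y, |y - z| ≤ |d| → |f1 y - f1 z - f2 z * (y - z)| ≤ L * |d| * |d| := by
    intro y hy
    have := mvt_aux (fun t => f1 t - f2 z * (t - z)) (fun t => f2 t - f2 z) z y (L * |d|)
      (fun t _ => by
        have := (h1 t).sub (((hasDerivAt_id t).sub_const z).const_mul (f2 z))
        refine this.congr_deriv ?_
        ring)
      (fun t ht => a2 t (ht.trans hy))
    have e : f1 y - f2 z * (y - z) - (f1 z - f2 z * (z - z)) = f1 y - f1 z - f2 z * (y - z) := by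
      ring
    rw [e] at this
    refine this.trans ?_
    gcongr
  have := mvt_aux (fun t => f t - f1 z * (t - z) - f2 z * (t - z) ^ 2 / 2)
      (fun t => f1 t - f1 z - f2 z * (t - z)) z (z + d) (L * |d| * |d|)
      (fun t _ => by
        have := ((h0 t).sub (((hasDerivAt_id t).sub_const z).const_mul (f1 z))).sub
          (((((hasDerivAt_id t).sub_const z).pow 2).const_mul (f2 z)).div_const 2)
        refine this.congr_deriv ?_
        simp; ring)
      (fun t ht => a1 t (ht.trans (by simp)))
  simp only [add_sub_cancel_left] at this
  have e : f (z + d) - f1 z * d - f2 z * d ^ 2 / 2 - (f z - f1 z * (z - z) - f2 z * (z - z) ^ 2 / 2)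
    = f (z + d) - f z - d * f1 z - d ^ 2 / 2 * f2 z := by ring
  rw [e] at this
  refine this.trans_eq (by ring)

lemma taylor2 (f f1 f2 : ℝ → ℝ) (v q L : ℝ) (hq : 0 ≤ q)
    (h0 : ∀ x, v ≤ x → HasDerivAt f (f1 x) x)
    (h1 : ∀ x, v ≤ x → HasDerivAt f1 (f2 x) x)
    (hL : ∀ y, v ≤ y → y ≤ v + q → |f2 y| ≤ L) :
    |f (v + q) - f v - q * f1 v| ≤ L * q ^ 2 := by
  have hL0 : 0 ≤ L := (abs_nonneg _).trans (hL v le_rfl (by linarith))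
  have a1 : ∀ y ∈ Set.Icc v (v + q), ‖f1 y - f1 v‖ ≤ L * q := by
    intro y hy
    have key := (convex_Icc v (v + q)).norm_image_sub_le_of_norm_hasDerivWithin_le
      (f := f1) (f' := f2) (C := L) (x := v) (y := y)
      (fun t ht => (h1 t ht.1).hasDerivWithinAt) (fun t ht => hL t ht.1 ht.2)
      (Set.left_mem_Icc.2 (by linarith)) hy
    refine key.trans ?_
    rw [Real.norm_of_nonneg (by linarith [hy.1])]
    gcongr
    linarith [hy.2]
  have key := (convex_Icc v (v + q)).norm_image_sub_le_of_norm_hasDerivWithin_le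
      (f := fun t => f t - f1 v * t) (f' := fun t => f1 t - f1 v) (C := L * q) (x := v) (y := v + q)
      (fun t ht => by
        have := ((h0 t ht.1).sub ((hasDerivAt_id t).const_mul (f1 v)))
        simp only [mul_one] at this
        exact this.hasDerivWithinAt) a1
      (Set.left_mem_Icc.2 (by linarith)) (Set.right_mem_Icc.2 (by linarith))
  rw [Real.norm_eq_abs, Real.norm_eq_abs, add_sub_cancel_left, abs_of_nonneg hq] at key
  have e : f (v + q) - f1 v * (v + q) - (f v - f1 v * v) = f (v + q) - f v - q * f1 v := by ring
  simp only [e] at key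
  refine key.trans_eq (by ring)

lemma absorb (k : ℕ) (L m ξ b β w : ℝ) (hL : 0 < L) (hm : 0 < m) (hξ : 0 ≤ ξ)
    (hb : 0 < b) (hβ : 0 < β) (hw0 : 0 ≤ w) (hw : w ≤ β ^ k) :
    L * ξ ^ 3 * b ^ k * w ≤ L * (2 * L / m) ^ k * ξ ^ (k + 3)
      + 1 / 2 * ξ ^ 2 * (m * β * b ^ (k + 1) * w) := by
  rcases le_total (L * ξ) (1 / 2 * m * β * b) with h | h
  · have h1 : L * ξ ^ 3 * b ^ k * w ≤ 1 / 2 * ξ ^ 2 * (m * β * b ^ (k + 1) * w) := by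
      calc L * ξ ^ 3 * b ^ k * w = (L * ξ) * (ξ ^ 2 * b ^ k * w) := by ring
        _ ≤ (1 / 2 * m * β * b) * (ξ ^ 2 * b ^ k * w) := by gcongr
        _ = _ := by ring
    have h2 : 0 ≤ L * (2 * L / m) ^ k * ξ ^ (k + 3) := by positivity
    linarith
  · have h1 : β * b ≤ 2 * L / m * ξ := by
      rw [div_mul_eq_mul_div, le_div_iff₀ hm]; linarith
    have h2 : b ^ k * w ≤ (2 * L / m * ξ) ^ k := by
      calc b ^ k * w ≤ b ^ k * β ^ k := by gcongr
        _ = (β * b) ^ k := by rw [mul_pow]; ring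
        _ ≤ _ := by gcongr
    have h3 : L * ξ ^ 3 * b ^ k * w ≤ L * (2 * L / m) ^ k * ξ ^ (k + 3) := by
      calc L * ξ ^ 3 * b ^ k * w = (L * ξ ^ 3) * (b ^ k * w) := by ring
        _ ≤ (L * ξ ^ 3) * (2 * L / m * ξ) ^ k := by gcongr
        _ = _ := by rw [mul_pow]; ring
    have h4 : 0 ≤ 1 / 2 * ξ ^ 2 * (m * β * b ^ (k + 1) * w) := by positivity
    linarith

lemma expdom (κ D : ℝ) (hκ : 0 < κ) (hκ1 : κ ≤ 1) : ∃ C : ℝ, 0 < C ∧ ∀ a b : ℝ,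
    b ^ 2 ≤ (1 + κ) * a ^ 2 + D →
    (1 + a ^ 4) * Real.exp (-a ^ 2 / 2) ≤ C * Real.exp (-(1 - κ) * b ^ 2 / 2) := by
  refine ⟨(1 + 8 / κ ^ 4) * Real.exp ((1 - κ) * D / 2), by positivity, ?_⟩
  intro a b h
  set y := κ ^ 2 * a ^ 2 / 2 with hy
  have hy0 : 0 ≤ y := by positivity
  have h1 : 1 + a ^ 4 ≤ (1 + 8 / κ ^ 4) * Real.exp y := by
    have e : a ^ 4 = 4 / κ ^ 4 * y ^ 2 := by rw [hy]; field_simp; ring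
    have q := Real.quadratic_le_exp_of_nonneg hy0
    have : 1 ≤ Real.exp y := Real.one_le_exp hy0
    have q2 : y ^ 2 ≤ 2 * Real.exp y := by linarith
    have : 4 / κ ^ 4 * y ^ 2 ≤ 4 / κ ^ 4 * (2 * Real.exp y) := by gcongr
    rw [e]
    have e2 : (1 + 8 / κ ^ 4) * Real.exp y = Real.exp y + 4 / κ ^ 4 * (2 * Real.exp y) := by ring
    linarith
  calc (1 + a ^ 4) * Real.exp (-a ^ 2 / 2)
      ≤ ((1 + 8 / κ ^ 4) * Real.exp y) * Real.exp (-a ^ 2 / 2) := by gcongr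
    _ = (1 + 8 / κ ^ 4) * Real.exp (y + -a ^ 2 / 2) := by rw [Real.exp_add]; ring
    _ ≤ (1 + 8 / κ ^ 4) * Real.exp ((1 - κ) * D / 2 + -(1 - κ) * b ^ 2 / 2) := by
        refine mul_le_mul_of_nonneg_left (Real.exp_le_exp.2 ?_) (by positivity)
        have : (1 - κ) * b ^ 2 ≤ (1 - κ) * ((1 + κ) * a ^ 2 + D) := by
          apply mul_le_mul_of_nonneg_left h; linarith
        rw [hy]; nlinarith
    _ = _ := by rw [Real.exp_add]; ring

lemma sq_exp_le (z : ℝ) : z ^ 2 * Real.exp (-z ^ 2 / 2) ≤ 2 := by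
  rw [neg_div, Real.exp_neg, ← div_eq_mul_inv, div_le_iff₀ (Real.exp_pos _)]
  linarith [Real.add_one_le_exp (z ^ 2 / 2)]

lemma exp_le_one' (z : ℝ) : Real.exp (-z ^ 2 / 2) ≤ 1 := by
  rw [Real.exp_le_one_iff]; nlinarith [sq_nonneg z]

/-- spatial profile and its derivatives -/
noncomputable def F0 (c z : ℝ) : ℝ := stdNormalCDF (-z) + c * Real.exp (-z ^ 2 / 2)
noncomputable def F1 (c z : ℝ) : ℝ :=
  (-(Real.sqrt (2 * Real.pi))⁻¹ - c * z) * Real.exp (-z ^ 2 / 2)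
noncomputable def F2 (c z : ℝ) : ℝ :=
  ((Real.sqrt (2 * Real.pi))⁻¹ * z + c * (z ^ 2 - 1)) * Real.exp (-z ^ 2 / 2)
noncomputable def F3 (c z : ℝ) : ℝ :=
  ((Real.sqrt (2 * Real.pi))⁻¹ * (1 - z ^ 2) + c * (3 * z - z ^ 3)) * Real.exp (-z ^ 2 / 2)

lemma hasDerivAt_e (z : ℝ) :
    HasDerivAt (fun z : ℝ => Real.exp (-z ^ 2 / 2)) (-z * Real.exp (-z ^ 2 / 2)) z := by
  have : HasDerivAt (fun z : ℝ => -z ^ 2 / 2) (-z) z := by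
    have := ((hasDerivAt_pow 2 z).neg).div_const 2
    refine this.congr_deriv ?_
    simp; ring
  have := this.exp
  refine this.congr_deriv ?_
  ring

lemma F0_deriv (c z : ℝ) : HasDerivAt (F0 c) (F1 c z) z := by
  have h1 : HasDerivAt (fun z => stdNormalCDF (-z)) (phi (-z) * (-1)) z :=
    (Phi_deriv (-z)).comp z (hasDerivAt_neg z)
  have := h1.add ((hasDerivAt_e z).const_mul c)
  refine this.congr_deriv ?_
  simp only [F1, phi, neg_sq]; ring

lemma F1_deriv (c z : ℝ) : HasDerivAt (F1 c) (F2 c z) z := by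
  have h1 : HasDerivAt (fun z => (-(Real.sqrt (2 * Real.pi))⁻¹ - c * z)) (-c) z := by
    have := ((hasDerivAt_id z).const_mul c).const_sub (-(Real.sqrt (2 * Real.pi))⁻¹)
    refine this.congr_deriv ?_
    ring
  have := h1.mul (hasDerivAt_e z)
  refine this.congr_deriv ?_
  simp only [F2]; ring

lemma F2_deriv (c z : ℝ) : HasDerivAt (F2 c) (F3 c z) z := by
  have h1 : HasDerivAt (fun z => ((Real.sqrt (2 * Real.pi))⁻¹ * z + c * (z ^ 2 - 1)))
      ((Real.sqrt (2 * Real.pi))⁻¹ + c * (2 * z)) z := by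
    have := ((hasDerivAt_id z).const_mul (Real.sqrt (2 * Real.pi))⁻¹).add
      (((hasDerivAt_pow 2 z).sub_const 1).const_mul c)
    refine this.congr_deriv ?_
    simp
  have := h1.mul (hasDerivAt_e z)
  refine this.congr_deriv ?_
  simp only [F3]; ring

lemma F0_bound (c z : ℝ) (hc : 0 ≤ c) : |F0 c z| ≤ 1 + c := by
  have h1 := Phi_nonneg (-z)
  have h2 := Phi_le_one (-z)
  have h3 := exp_le_one' z
  have h4 := Real.exp_pos (-z ^ 2 / 2)
  unfold F0
  rw [abs_of_nonneg (by positivity)]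
  nlinarith

lemma F1_bound (c z : ℝ) (hc : 0 ≤ c) : |F1 c z| ≤ 1 + 3 * c := by
  have h3 := exp_le_one' z
  have h4 := Real.exp_pos (-z ^ 2 / 2)
  have h5 := sq_exp_le z
  have h6 := c0_le_one
  have h7 := c0_nonneg
  unfold F1
  rw [abs_mul, abs_of_pos h4]
  have : |(-(Real.sqrt (2 * Real.pi))⁻¹ - c * z)| ≤ 1 + c * (1 + z ^ 2) := by
    have : c * |z| ≤ c * (1 + z ^ 2) := by
      gcongr; rw [abs_le]; constructor <;> nlinarith [sq_nonneg (z - 1), sq_nonneg (z + 1)]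
    calc |(-(Real.sqrt (2 * Real.pi))⁻¹ - c * z)|
        ≤ |(-(Real.sqrt (2 * Real.pi))⁻¹)| + |c * z| := abs_sub _ _
      _ ≤ _ := by rw [abs_neg, abs_of_nonneg h7, abs_mul, abs_of_nonneg hc]; linarith
  calc _ ≤ (1 + c * (1 + z ^ 2)) * Real.exp (-z ^ 2 / 2) := by gcongr
    _ = (1 + c) * Real.exp (-z ^ 2 / 2) + c * (z ^ 2 * Real.exp (-z ^ 2 / 2)) := by ring
    _ ≤ (1 + c) * 1 + c * 2 := by gcongr
    _ = _ := by ring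

lemma F2_bound (c z : ℝ) (hc : 0 ≤ c) : |F2 c z| ≤ 3 + 3 * c := by
  have h3 := exp_le_one' z
  have h4 := Real.exp_pos (-z ^ 2 / 2)
  have h5 := sq_exp_le z
  have h6 := c0_le_one
  have h7 := c0_nonneg
  unfold F2
  rw [abs_mul, abs_of_pos h4]
  have : |((Real.sqrt (2 * Real.pi))⁻¹ * z + c * (z ^ 2 - 1))| ≤ (1 + z ^ 2) + c * (1 + z ^ 2) := by
    have h1 : (Real.sqrt (2 * Real.pi))⁻¹ * |z| ≤ 1 * (1 + z ^ 2) := by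
      gcongr; rw [abs_le]; constructor <;> nlinarith [sq_nonneg (z - 1), sq_nonneg (z + 1)]
    have h2 : c * |z ^ 2 - 1| ≤ c * (1 + z ^ 2) := by
      gcongr; rw [abs_le]; constructor <;> nlinarith
    refine (abs_add_le _ _).trans ?_
    rw [abs_mul, abs_mul, abs_of_nonneg h7, abs_of_nonneg hc]; linarith
  calc _ ≤ ((1 + z ^ 2) + c * (1 + z ^ 2)) * Real.exp (-z ^ 2 / 2) := by gcongr
    _ = (1 + c) * Real.exp (-z ^ 2 / 2) + (1 + c) * (z ^ 2 * Real.exp (-z ^ 2 / 2)) := by ring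
    _ ≤ (1 + c) * 1 + (1 + c) * 2 := by gcongr
    _ = _ := by ring

lemma F3_bound (c z : ℝ) (hc : 0 ≤ c) :
    |F3 c z| ≤ (2 + 4 * c) * ((1 + z ^ 4) * Real.exp (-z ^ 2 / 2)) := by
  have h4 := Real.exp_pos (-z ^ 2 / 2)
  have h6 := c0_le_one
  have h7 := c0_nonneg
  unfold F3
  rw [abs_mul, abs_of_pos h4, ← mul_assoc]
  gcongr
  have h1 : (Real.sqrt (2 * Real.pi))⁻¹ * |1 - z ^ 2| ≤ 1 * (2 * (1 + z ^ 4)) := by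
    gcongr; rw [abs_le]; constructor <;> nlinarith [sq_nonneg (z ^ 2 - 1)]
  have h2 : c * |3 * z - z ^ 3| ≤ c * (4 * (1 + z ^ 4)) := by
    gcongr; rw [abs_le]
    constructor <;> nlinarith [sq_nonneg (z ^ 2 - 1), sq_nonneg (z - 1), sq_nonneg (z + 1),
      sq_nonneg (z ^ 2 - z), sq_nonneg (z ^ 2 + z), sq_nonneg z]
  refine (abs_add_le _ _).trans ?_
  rw [abs_mul, abs_mul, abs_of_nonneg h7, abs_of_nonneg hc]; linarith

noncomputable def kap (k : ℕ) : ℝ := 1 / ((k : ℝ) + 1)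
noncomputable def MM (k : ℕ) : ℝ := (k : ℝ) + 4

lemma kap_pos (k : ℕ) : 0 < kap k := by unfold kap; positivity
lemma kap_le (k : ℕ) : kap k ≤ 1 := by
  unfold kap; rw [div_le_one (by positivity)]; linarith [(Nat.cast_nonneg k : (0:ℝ) ≤ k)]
lemma MM_pos (k : ℕ) : 0 < MM k := by unfold MM; positivity

noncomputable def bet (k : ℕ) (v : ℝ) : ℝ := v ^ (-kap k)
noncomputable def cc (k : ℕ) (v : ℝ) : ℝ := MM k * (2 - bet k v) * (√v)⁻¹
noncomputable def zz (s v : ℝ) : ℝ := s * (√v)⁻¹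
/-- the potential -/
noncomputable def WW (k : ℕ) (s v : ℝ) : ℝ := F0 (cc k v) (zz s v)
/-- the gain -/
noncomputable def gg (k : ℕ) (s v : ℝ) : ℝ :=
  MM k * kap k * bet k v * (√v)⁻¹ * Real.exp (-(zz s v) ^ 2 / 2) / v

noncomputable def NN (k : ℕ) (s v : ℝ) : ℝ :=
  (Real.sqrt (2 * Real.pi))⁻¹ * zz s v / 2 + MM k * (2 - bet k v) * (√v)⁻¹ * ((zz s v) ^ 2 - 1) / 2
    + MM k * kap k * bet k v * (√v)⁻¹

noncomputable def NN' (k : ℕ) (s v : ℝ) : ℝ :=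
  -(Real.sqrt (2 * Real.pi))⁻¹ * zz s v / 4
    + MM k * kap k * bet k v * (√v)⁻¹ * ((zz s v) ^ 2 - 1) / 2
    - MM k * (2 - bet k v) * (√v)⁻¹ * ((zz s v) ^ 2 - 1) / 4
    - MM k * (2 - bet k v) * (√v)⁻¹ * (zz s v) ^ 2 / 2
    - MM k * kap k ^ 2 * bet k v * (√v)⁻¹ - MM k * kap k * bet k v * (√v)⁻¹ / 2

noncomputable def G1 (k : ℕ) (s v : ℝ) : ℝ := NN k s v * Real.exp (-(zz s v) ^ 2 / 2) / v
noncomputable def G2 (k : ℕ) (s v : ℝ) : ℝ :=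
  (NN' k s v + NN k s v * ((zz s v) ^ 2 / 2 - 1)) * Real.exp (-(zz s v) ^ 2 / 2) / v ^ 2

lemma rho_deriv (v : ℝ) (hv : 0 < v) :
    HasDerivAt (fun v : ℝ => (√v)⁻¹) (-(√v)⁻¹ / (2 * v)) v := by
  have := (Real.hasDerivAt_sqrt hv.ne').inv (Real.sqrt_pos.2 hv).ne'
  refine this.congr_deriv ?_
  have h := Real.sqrt_pos.2 hv
  rw [Real.sq_sqrt hv.le]; field_simp

lemma zz_deriv (s v : ℝ) (hv : 0 < v) :
    HasDerivAt (fun v : ℝ => zz s v) (-zz s v / (2 * v)) v := by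
  refine ((rho_deriv v hv).const_mul s).congr_deriv ?_
  unfold zz; ring

lemma bet_deriv (k : ℕ) (v : ℝ) (hv : 0 < v) :
    HasDerivAt (fun v : ℝ => bet k v) (-kap k * bet k v / v) v := by
  refine (Real.hasDerivAt_rpow_const (Or.inl hv.ne')).congr_deriv ?_
  unfold bet
  rw [Real.rpow_sub_one hv.ne']; ring

lemma ee_deriv (s v : ℝ) (hv : 0 < v) :
    HasDerivAt (fun v : ℝ => Real.exp (-(zz s v) ^ 2 / 2))
      ((zz s v) ^ 2 / (2 * v) * Real.exp (-(zz s v) ^ 2 / 2)) v := by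
  refine ((hasDerivAt_e (zz s v)).comp v (zz_deriv s v hv)).congr_deriv ?_
  ring

lemma WW_deriv (k : ℕ) (s v : ℝ) (hv : 0 < v) :
    HasDerivAt (fun v : ℝ => WW k s v) (G1 k s v) v := by
  have h1 : HasDerivAt (fun v => stdNormalCDF (-zz s v)) (phi (-zz s v) * (-(-zz s v / (2 * v)))) v :=
    HasDerivAt.comp (h₂ := stdNormalCDF) (h := fun v => -zz s v) v
      (Phi_deriv (-zz s v)) (zz_deriv s v hv).neg
  have h2 := ((((bet_deriv k v hv).const_sub 2).const_mul (MM k)).mul (rho_deriv v hv)).mul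
    (ee_deriv s v hv)
  refine (h1.add h2).congr_deriv ?_
  simp only [G1, NN, phi, neg_sq, Pi.mul_apply]
  field_simp
  ring

lemma NN_deriv (k : ℕ) (s v : ℝ) (hv : 0 < v) :
    HasDerivAt (fun v : ℝ => NN k s v) (NN' k s v / v) v := by
  have h1 := ((zz_deriv s v hv).const_mul (Real.sqrt (2 * Real.pi))⁻¹).div_const 2
  have h2 := (((((bet_deriv k v hv).const_sub 2).const_mul (MM k)).mul (rho_deriv v hv)).mul
    (((zz_deriv s v hv).pow 2).sub_const 1)).div_const 2
  have h3 := ((bet_deriv k v hv).const_mul (MM k * kap k)).mul (rho_deriv v hv)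
  refine ((h1.add h2).add h3).congr_deriv ?_
  simp only [NN', Pi.mul_apply, Pi.pow_apply]
  field_simp
  ring

lemma G1_deriv (k : ℕ) (s v : ℝ) (hv : 0 < v) :
    HasDerivAt (fun v : ℝ => G1 k s v) (G2 k s v) v := by
  have := ((NN_deriv k s v hv).mul (ee_deriv s v hv)).div (hasDerivAt_id v) hv.ne'
  refine this.congr_deriv ?_
  simp only [G2, Pi.mul_apply, id]
  field_simp
  ring

lemma bet_pos (k : ℕ) (v : ℝ) (hv : 0 < v) : 0 < bet k v := Real.rpow_pos_of_pos hv _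
lemma bet_le (k : ℕ) (v : ℝ) (hv : 1 ≤ v) : bet k v ≤ 1 :=
  Real.rpow_le_one_of_one_le_of_nonpos hv (by linarith [kap_pos k])
lemma rho_pos (v : ℝ) (hv : 1 ≤ v) : 0 < (√v)⁻¹ := by
  have : 0 < √v := Real.sqrt_pos.2 (by linarith)
  positivity
lemma rho_le (v : ℝ) (hv : 1 ≤ v) : (√v)⁻¹ ≤ 1 :=
  inv_le_one_of_one_le₀ (by rw [Real.one_le_sqrt]; exact hv)

lemma cc_nonneg (k : ℕ) (v : ℝ) (hv : 1 ≤ v) : 0 ≤ cc k v := by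
  have := bet_le k v hv
  have h2 := rho_pos v hv
  have h3 := MM_pos k
  unfold cc
  have : 0 ≤ 2 - bet k v := by linarith
  positivity

lemma cc_le (k : ℕ) (v : ℝ) (hv : 1 ≤ v) : cc k v ≤ 2 * MM k * (√v)⁻¹ := by
  have := bet_pos k v (by linarith)
  have h2 := rho_pos v hv
  have h3 := MM_pos k
  unfold cc
  refine mul_le_mul_of_nonneg_right ?_ h2.le
  nlinarith

lemma cc_le' (k : ℕ) (v : ℝ) (hv : 1 ≤ v) : cc k v ≤ 2 * MM k := by
  have h1 := cc_le k v hv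
  have h2 := rho_le v hv
  have h3 := MM_pos k
  nlinarith

lemma gain_eq (k : ℕ) (s v : ℝ) : G1 k s v = F2 (cc k v) (zz s v) / (2 * v) + gg k s v := by
  simp only [G1, NN, F2, cc, gg]; ring

lemma abs_mul_le {a b c d : ℝ} (h1 : |a| ≤ c) (h2 : |b| ≤ d) : |a * b| ≤ c * d := by
  rw [abs_mul]
  have := abs_nonneg a
  have := abs_nonneg b
  exact mul_le_mul h1 h2 (abs_nonneg b) ((abs_nonneg a).trans h1)

/-- coefficient bounds packaged -/
lemma coef (k : ℕ) (v : ℝ) (hv : 1 ≤ v) :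
    0 ≤ MM k * (2 - bet k v) * (√v)⁻¹ ∧ MM k * (2 - bet k v) * (√v)⁻¹ ≤ 2 * MM k ∧
    0 ≤ MM k * kap k * bet k v * (√v)⁻¹ ∧ MM k * kap k * bet k v * (√v)⁻¹ ≤ MM k ∧
    0 ≤ MM k * kap k ^ 2 * bet k v * (√v)⁻¹ ∧ MM k * kap k ^ 2 * bet k v * (√v)⁻¹ ≤ MM k := by
  have a1 := bet_pos k v (by linarith)
  have a2 := bet_le k v hv
  have a3 := rho_pos v hv
  have a4 := rho_le v hv
  have a5 := kap_pos k
  have a6 := kap_le k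
  have a7 := MM_pos k
  refine ⟨cc_nonneg k v hv, cc_le' k v hv, by positivity, ?_, by positivity, ?_⟩
  · calc MM k * kap k * bet k v * (√v)⁻¹ ≤ MM k * 1 * 1 * 1 := by gcongr
      _ = _ := by ring
  · calc MM k * kap k ^ 2 * bet k v * (√v)⁻¹ ≤ MM k * 1 ^ 2 * 1 * 1 := by gcongr
      _ = _ := by ring

lemma NN_bound (k : ℕ) (s v : ℝ) (hv : 1 ≤ v) :
    |NN k s v| ≤ (1 + 2 * MM k) * (1 + (zz s v) ^ 2) := by
  obtain ⟨a1, a2, a3, a4, -, -⟩ := coef k v hv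
  have b1 := c0_le_one
  have b2 := c0_nonneg
  have hM := MM_pos k
  unfold NN
  set z := zz s v
  set A := MM k * (2 - bet k v) * (√v)⁻¹
  set B := MM k * kap k * bet k v * (√v)⁻¹
  set c := (Real.sqrt (2 * Real.pi))⁻¹
  have t1 : |c * z| ≤ 1 * (1 + z ^ 2) := abs_mul_le (by rw [abs_of_nonneg b2]; exact b1)
    (by rw [abs_le]; constructor <;> nlinarith [sq_nonneg (z - 1), sq_nonneg (z + 1)])
  have t2 : |A * (z ^ 2 - 1)| ≤ (2 * MM k) * (1 + z ^ 2) :=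
    abs_mul_le (by rw [abs_of_nonneg a1]; exact a2) (by rw [abs_le]; constructor <;> nlinarith)
  have t3 : B ≤ MM k * (1 + z ^ 2) := by nlinarith [sq_nonneg z]
  rw [abs_le] at t1 t2 ⊢
  constructor <;> nlinarith [sq_nonneg z]

lemma NN'_bound (k : ℕ) (s v : ℝ) (hv : 1 ≤ v) :
    |NN' k s v| ≤ (1 + 5 * MM k) * (1 + (zz s v) ^ 2) := by
  obtain ⟨a1, a2, a3, a4, a5, a6⟩ := coef k v hv
  have b1 := c0_le_one
  have b2 := c0_nonneg
  have hM := MM_pos k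
  unfold NN'
  set z := zz s v
  set A := MM k * (2 - bet k v) * (√v)⁻¹
  set B := MM k * kap k * bet k v * (√v)⁻¹
  set D := MM k * kap k ^ 2 * bet k v * (√v)⁻¹
  set c := (Real.sqrt (2 * Real.pi))⁻¹
  have t1 : |-c * z| ≤ 1 * (1 + z ^ 2) := abs_mul_le (by rw [abs_neg, abs_of_nonneg b2]; exact b1)
    (by rw [abs_le]; constructor <;> nlinarith [sq_nonneg (z - 1), sq_nonneg (z + 1)])
  have t2 : |A * (z ^ 2 - 1)| ≤ (2 * MM k) * (1 + z ^ 2) :=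
    abs_mul_le (by rw [abs_of_nonneg a1]; exact a2) (by rw [abs_le]; constructor <;> nlinarith)
  have t3 : |B * (z ^ 2 - 1)| ≤ (MM k) * (1 + z ^ 2) :=
    abs_mul_le (by rw [abs_of_nonneg a3]; exact a4) (by rw [abs_le]; constructor <;> nlinarith)
  have t4 : |A * z ^ 2| ≤ (2 * MM k) * (1 + z ^ 2) :=
    abs_mul_le (by rw [abs_of_nonneg a1]; exact a2) (by rw [abs_le]; constructor <;> nlinarith)
  have t5 : B ≤ MM k * (1 + z ^ 2) := by nlinarith [sq_nonneg z]
  have t6 : D ≤ MM k * (1 + z ^ 2) := by nlinarith [sq_nonneg z]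
  have t7 : 0 ≤ MM k * (1 + z ^ 2) := by positivity
  have t8 : 0 ≤ z ^ 2 := by positivity
  rw [abs_le] at t1 t2 t3 t4 ⊢
  constructor <;> linarith

lemma G2_bound (k : ℕ) (s v : ℝ) (hv : 1 ≤ v) :
    |G2 k s v| ≤ (4 + 14 * MM k) * ((1 + (zz s v) ^ 4) * Real.exp (-(zz s v) ^ 2 / 2)) / v ^ 2 := by
  have h1 := NN_bound k s v hv
  have h2 := NN'_bound k s v hv
  have hM := MM_pos k
  unfold G2
  rw [abs_div, abs_mul, abs_of_pos (Real.exp_pos _), abs_of_nonneg (sq_nonneg v), ← mul_assoc]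
  gcongr
  set z := zz s v
  have h3 : |NN k s v * (z ^ 2 / 2 - 1)| ≤ ((1 + 2 * MM k) * (1 + z ^ 2)) * (1 + z ^ 2) :=
    abs_mul_le h1 (by rw [abs_le]; constructor <;> nlinarith)
  refine (abs_add_le _ _).trans ?_
  have h4 : (1 + z ^ 2) * (1 + z ^ 2) ≤ 2 * (1 + z ^ 4) := by nlinarith [sq_nonneg (z ^ 2 - 1)]
  have h5 : (1 + z ^ 2) ≤ 2 * (1 + z ^ 4) := by nlinarith [sq_nonneg (z ^ 2 - 1)]
  have h6 : (1 + 5 * MM k) * (1 + z ^ 2) ≤ (1 + 5 * MM k) * (2 * (1 + z ^ 4)) := by gcongr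
  have h7 : ((1 + 2 * MM k) * (1 + z ^ 2)) * (1 + z ^ 2) ≤ (1 + 2 * MM k) * (2 * (1 + z ^ 4)) := by
    rw [mul_assoc]; gcongr
  linarith

lemma kap_mul (k : ℕ) : kap k * ((k : ℝ) + 1) = 1 := by unfold kap; field_simp

lemma rho_sq (v : ℝ) (hv : 1 ≤ v) : (√v)⁻¹ ^ 2 = v⁻¹ := by
  rw [inv_pow, Real.sq_sqrt (by linarith)]

lemma w_le (k : ℕ) (v : ℝ) (hv : 1 ≤ v) : (√v)⁻¹ ^ 3 ≤ bet k v ^ k := by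
  have h1 : (√v)⁻¹ ^ 3 ≤ v⁻¹ := by
    rw [← rho_sq v hv]
    exact pow_le_pow_of_le_one (rho_pos v hv).le (rho_le v hv) (by norm_num)
  have h2 : v⁻¹ ≤ bet k v ^ k := by
    unfold bet
    rw [← Real.rpow_mul_natCast (by linarith), ← Real.rpow_neg_one]
    apply Real.rpow_le_rpow_of_exponent_le hv
    have := kap_mul k
    have := kap_pos k
    nlinarith
  exact h1.trans h2

lemma absorb' (k : ℕ) (L p : ℝ) (hL : 0 < L) (hp : 1 ≤ p) (hk : 2 * p ≤ (k : ℝ) + 3) :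
    ∃ C : ℝ, 0 < C ∧ ∀ v s ξ : ℝ, 1 ≤ v → 0 ≤ ξ → ξ ≤ 1 →
      L * ξ ^ 3 * Real.exp (-(1 - kap k) * (zz s v) ^ 2 / 2) * (√v)⁻¹ ^ 3
        ≤ C * ξ ^ (2 * p) + 1 / 2 * ξ ^ 2 * gg k s v := by
  have hm : 0 < MM k * kap k := mul_pos (MM_pos k) (kap_pos k)
  refine ⟨L * (2 * L / (MM k * kap k)) ^ k, by positivity, ?_⟩
  intro v s ξ hv h0 h1
  set z := zz s v with hz
  have e1 : Real.exp (-(1 - kap k) * z ^ 2 / 2) = Real.exp (-kap k * z ^ 2 / 2) ^ k := by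
    rw [← Real.exp_nat_mul]; congr 1
    have := kap_mul k
    linear_combination (z ^ 2 / 2) * this
  have e2 : gg k s v = MM k * kap k * bet k v * Real.exp (-kap k * z ^ 2 / 2) ^ (k + 1)
      * (√v)⁻¹ ^ 3 := by
    have : Real.exp (-kap k * z ^ 2 / 2) ^ (k + 1) = Real.exp (-z ^ 2 / 2) := by
      rw [← Real.exp_nat_mul]; congr 1
      have := kap_mul k
      push_cast
      linear_combination (-z ^ 2 / 2) * this
    have h3 : (√v)⁻¹ ^ 3 = v⁻¹ * (√v)⁻¹ := by rw [← rho_sq v hv]; ring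
    rw [this, h3]
    simp only [gg, ← hz]; ring
  have key := absorb k L (MM k * kap k) ξ (Real.exp (-kap k * z ^ 2 / 2)) (bet k v) ((√v)⁻¹ ^ 3)
    hL hm h0 (Real.exp_pos _) (bet_pos k v (by linarith)) (by have := rho_pos v hv; positivity)
    (w_le k v hv)
  rw [e1, e2]
  refine key.trans ?_
  gcongr
  rw [← Real.rpow_natCast]
  refine Real.rpow_le_rpow_of_exponent_ge_of_imp h0 h1 ?_ ?_
  · push_cast; linarith
  · intro _ h; exfalso
    have : (0:ℝ) < ((k+3:ℕ):ℝ) := by positivity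
    linarith

lemma gg_nonneg (k : ℕ) (s v : ℝ) (hv : 1 ≤ v) : 0 ≤ gg k s v := by
  have a1 := bet_pos k v (by linarith)
  have a3 := rho_pos v hv
  have a5 := kap_pos k
  have a7 := MM_pos k
  unfold gg; positivity

lemma gg_le (k : ℕ) (s v : ℝ) (hv : 1 ≤ v) : gg k s v ≤ MM k := by
  obtain ⟨a1, a2, a3, a4, a5, a6⟩ := coef k v hv
  unfold gg
  rw [div_le_iff₀ (by linarith)]
  have := exp_le_one' (zz s v)
  have hM := MM_pos k
  calc _ ≤ MM k * 1 := by gcongr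
    _ ≤ _ := by gcongr

lemma space (k : ℕ) (p : ℝ) (hp : 1 ≤ p) (hk : 2 * p ≤ (k : ℝ) + 3) :
    ∃ C : ℝ, 0 < C ∧ ∀ v s x : ℝ, 1 ≤ v →
      WW k (s + x) v ≤ WW k s v + x * (F1 (cc k v) (zz s v) * (√v)⁻¹)
        + x ^ 2 * (F2 (cc k v) (zz s v) / (2 * v)) + C * |x| ^ (2 * p) + 1 / 2 * x ^ 2 * gg k s v := by
  obtain ⟨C1, hC1, hdom⟩ := expdom (kap k) (1 + 1 / kap k) (kap_pos k) (kap_le k)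
  have hM := MM_pos k
  obtain ⟨C2, hC2, habs⟩ := absorb' k ((2 + 4 * (2 * MM k)) * C1) p (by positivity) hp hk
  refine ⟨C2 + (10 + 20 * (2 * MM k)), by positivity, ?_⟩
  intro v s x hv
  have hρ := rho_pos v hv
  have hρ1 := rho_le v hv
  have hρ2 := rho_sq v hv
  have hc := cc_nonneg k v hv
  have hc' := cc_le' k v hv
  have hg := gg_nonneg k s v hv
  set z := zz s v with hz
  set c := cc k v
  have ez : zz (s + x) v = z + x * (√v)⁻¹ := by simp only [hz, zz]; ring
  have e2 : x ^ 2 * (F2 c z / (2 * v)) = (x * (√v)⁻¹) ^ 2 / 2 * F2 c z := by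
    rw [mul_pow, hρ2]; field_simp
  have hd : |x * (√v)⁻¹| ≤ |x| := by
    rw [abs_mul, abs_of_pos hρ]; nlinarith [abs_nonneg x]
  have eW : WW k s v = F0 c z := rfl
  have eW' : WW k (s + x) v = F0 c (z + x * (√v)⁻¹) := by rw [← ez]; rfl
  rw [eW, eW', e2]
  have hx0 : 0 ≤ |x| ^ (2 * p) := by positivity
  rcases le_total |x| 1 with h1 | h1
  · have T := taylor3 (F0 c) (F1 c) (F2 c) (F3 c) (F0_deriv c) (F1_deriv c) (F2_deriv c) z
      (x * (√v)⁻¹) ((2 + 4 * (2 * MM k)) * C1 * Real.exp (-(1 - kap k) * z ^ 2 / 2)) (by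
        intro y hy
        refine (F3_bound c y hc).trans ?_
        have hy1 : |y - z| ≤ 1 := hy.trans (hd.trans h1)
        have hd2 := hdom y z (by
          have hκ := kap_pos k
          have : (z - y) ^ 2 ≤ 1 := by
            rw [← sq_abs, abs_sub_comm]; nlinarith [abs_nonneg (y - z)]
          have h3 : 0 ≤ (kap k * y - (z - y)) ^ 2 / kap k := by positivity
          have h4 : (kap k * y - (z - y)) ^ 2 / kap k
            = kap k * y ^ 2 - 2 * y * (z - y) + (z - y) ^ 2 * (1 / kap k) := by field_simp; ring
          have h5 : (z - y) ^ 2 * (1 / kap k) ≤ 1 * (1 / kap k) := by gcongr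
          nlinarith)
        calc _ ≤ (2 + 4 * (2 * MM k)) * ((1 + y ^ 4) * Real.exp (-y ^ 2 / 2)) := by gcongr
          _ ≤ (2 + 4 * (2 * MM k)) * (C1 * Real.exp (-(1 - kap k) * z ^ 2 / 2)) := by gcongr
          _ = _ := by ring)
    have A := habs v s |x| hv (abs_nonneg x) h1
    rw [sq_abs, ← hz] at A
    have T2 := (le_abs_self _).trans T
    have e3 : (2 + 4 * (2 * MM k)) * C1 * Real.exp (-(1 - kap k) * z ^ 2 / 2) * |x * (√v)⁻¹| ^ 3
      = (2 + 4 * (2 * MM k)) * C1 * |x| ^ 3 * Real.exp (-(1 - kap k) * z ^ 2 / 2) * (√v)⁻¹ ^ 3 := by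
      rw [abs_mul, abs_of_pos hρ]; ring
    rw [e3] at T2
    have : 0 ≤ (10 + 20 * (2 * MM k)) * |x| ^ (2 * p) := by positivity
    nlinarith
  · have b0 := F0_bound c z hc
    have b0' := F0_bound c (z + x * (√v)⁻¹) hc
    have b1 := F1_bound c z hc
    have b2 := F2_bound c z hc
    set d := x * (√v)⁻¹
    have hx2 : |x| ^ 2 ≤ |x| ^ (2 * p) := by
      rw [← Real.rpow_natCast]
      apply Real.rpow_le_rpow_of_exponent_le h1
      push_cast; linarith
    have hx1 : 1 ≤ |x| ^ 2 := by nlinarith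
    have d1 : |d * F1 c z| ≤ |x| ^ 2 * (1 + 3 * (2 * MM k)) :=
      abs_mul_le (hd.trans (by nlinarith [abs_nonneg x])) (by linarith)
    have d2 : |d ^ 2 / 2 * F2 c z| ≤ |x| ^ 2 * (3 + 3 * (2 * MM k)) := by
      apply abs_mul_le _ (by linarith)
      rw [abs_of_nonneg (by positivity), ← sq_abs]
      have := pow_le_pow_left₀ (abs_nonneg d) hd 2
      have := sq_nonneg |d|
      linarith
    have d3 := (abs_le.1 d1).1
    have d4 := (abs_le.1 d2).1
    have d5 := (abs_le.1 b0).1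
    have d6 := (abs_le.1 b0').2
    have g2 : 0 ≤ x ^ 2 * gg k s v := by positivity
    have g3 : (10 + 20 * (2 * MM k)) * |x| ^ 2 ≤ (10 + 20 * (2 * MM k)) * |x| ^ (2 * p) := by gcongr
    have g4 : 0 ≤ C2 * |x| ^ (2 * p) := by positivity
    have g5 : (1 + 2 * MM k) * 1 ≤ (1 + 2 * MM k) * |x| ^ 2 := by gcongr
    have g6 : 0 ≤ |x| ^ 2 * MM k := by positivity
    have g7 : MM k * |x| ^ (2 * p) = |x| ^ (2 * p) * MM k := by ring
    linarith

lemma time (k : ℕ) (p : ℝ) (hp : 1 ≤ p) (hk : 2 * p ≤ (k : ℝ) + 3) :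
    ∃ C : ℝ, 0 < C ∧ ∀ v s q : ℝ, (k : ℝ) + 1 ≤ v → 0 ≤ q →
      WW k s v + q * G1 k s v ≤ WW k s (v + q) + C * q ^ p + 1 / 2 * q * gg k s v := by
  obtain ⟨C1, hC1, hdom⟩ := expdom (kap k) 0 (kap_pos k) (kap_le k)
  have hM := MM_pos k
  obtain ⟨C2, hC2, habs⟩ := absorb' k ((4 + 14 * MM k) * C1) p (by positivity) hp hk
  refine ⟨C2 + (10 + 20 * (2 * MM k)), by positivity, ?_⟩
  intro v s q hv' hq
  have hv : 1 ≤ v := by linarith [(Nat.cast_nonneg k : (0:ℝ) ≤ k)]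
  have hρ := rho_pos v hv
  have hρ1 := rho_le v hv
  have hρ2 := rho_sq v hv
  have hg := gg_nonneg k s v hv
  have hq0 : 0 ≤ q ^ p := by positivity
  rcases le_total q 1 with h1 | h1
  · have T := taylor2 (fun u => WW k s u) (fun u => G1 k s u) (fun u => G2 k s u) v q
      ((4 + 14 * MM k) * C1 * Real.exp (-(1 - kap k) * (zz s v) ^ 2 / 2) / v ^ 2) hq
      (fun u hu => WW_deriv k s u (by linarith)) (fun u hu => G1_deriv k s u (by linarith)) (by
        intro u hu1 hu2
        refine (G2_bound k s u (by linarith)).trans ?_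
        have hd2 := hdom (zz s u) (zz s v) (by
          simp only [zz, mul_pow]
          rw [rho_sq v hv, rho_sq u (by linarith), add_zero, mul_left_comm]
          gcongr
          rw [← div_eq_mul_inv, ← one_div, div_le_div_iff₀ (by linarith) (by linarith)]
          have := kap_mul k
          have := kap_pos k
          nlinarith)
        calc _ ≤ (4 + 14 * MM k) * (C1 * Real.exp (-(1 - kap k) * (zz s v) ^ 2 / 2)) / v ^ 2 := by
              gcongr
          _ = _ := by ring)
    have A := habs v s (√q) hv (Real.sqrt_nonneg q) (Real.sqrt_le_iff.2 ⟨by norm_num, by simpa using h1⟩)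
    have e1 : √q ^ (2 * p) = q ^ p := by
      rw [Real.sqrt_eq_rpow, ← Real.rpow_mul hq]; congr 1; ring
    rw [e1, Real.sq_sqrt hq] at A
    have T2 := (abs_le.1 T).1
    set X := (4 + 14 * MM k) * C1 * Real.exp (-(1 - kap k) * (zz s v) ^ 2 / 2) with hX
    have hXn : 0 ≤ X := by positivity
    have e3 : X / v ^ 2 * q ^ 2 ≤ (4 + 14 * MM k) * C1 * √q ^ 3 *
        Real.exp (-(1 - kap k) * (zz s v) ^ 2 / 2) * (√v)⁻¹ ^ 3 := by
      have e4 : X / v ^ 2 * q ^ 2 = X * (√q * (√v)⁻¹) ^ 4 := by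
        have : (√q * (√v)⁻¹) ^ 4 = (√q ^ 2) ^ 2 * ((√v)⁻¹ ^ 2) ^ 2 := by ring
        rw [this, Real.sq_sqrt hq, hρ2]; field_simp
      have e5 : (√q * (√v)⁻¹) ^ 4 ≤ (√q * (√v)⁻¹) ^ 3 := by
        have s1 := Real.sqrt_nonneg q
        have s2 : √q ≤ 1 := Real.sqrt_le_iff.2 ⟨by norm_num, by simpa using h1⟩
        apply pow_le_pow_of_le_one (by positivity) _ (by norm_num)
        nlinarith
      rw [e4]
      calc _ ≤ X * (√q * (√v)⁻¹) ^ 3 := by gcongr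
        _ = _ := by rw [hX]; ring
    have : 0 ≤ (10 + 20 * (2 * MM k)) * q ^ p := by positivity
    nlinarith
  · have hvq : 1 ≤ v + q := by linarith
    have b0 := F0_bound (cc k v) (zz s v) (cc_nonneg k v hv)
    have b0' := F0_bound (cc k (v + q)) (zz s (v + q)) (cc_nonneg k _ hvq)
    have b2 := F2_bound (cc k v) (zz s v) (cc_nonneg k v hv)
    have c1 := cc_le' k v hv
    have c2 := cc_le' k _ hvq
    have g1 := gg_le k s v hv
    have hqp : q ≤ q ^ p := by
      nth_rewrite 1 [← Real.rpow_one q]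
      exact Real.rpow_le_rpow_of_exponent_le h1 hp
    have d1 : F2 (cc k v) (zz s v) / (2 * v) ≤ 3 + 3 * (2 * MM k) := by
      rw [div_le_iff₀ (by linarith)]
      have := (abs_le.1 b2).2
      nlinarith
    have d2 : G1 k s v ≤ 3 + 7 * MM k := by rw [gain_eq]; linarith
    have d3 : q * G1 k s v ≤ q * (3 + 7 * MM k) := by gcongr
    have d5 := (abs_le.1 b0).2
    have d6 := (abs_le.1 b0').1
    have e1 : WW k s v = F0 (cc k v) (zz s v) := rfl
    have e2 : WW k s (v + q) = F0 (cc k (v + q)) (zz s (v + q)) := rfl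
    have g2 : 0 ≤ q * gg k s v := by positivity
    have g3 : (10 + 20 * (2 * MM k)) * q ≤ (10 + 20 * (2 * MM k)) * q ^ p := by gcongr
    have g4 : 0 ≤ C2 * q ^ p := by positivity
    have g5 : (1 + 2 * MM k) * 1 ≤ (1 + 2 * MM k) * q := by gcongr
    rw [e1, e2]
    nlinarith

noncomputable def WT (k : ℕ) (s v : ℝ) : ℝ := if (k : ℝ) + 1 ≤ v then WW k s v else 0
noncomputable def AT (k : ℕ) (s v : ℝ) : ℝ :=
  if (k : ℝ) + 1 ≤ v then F1 (cc k v) (zz s v) * (√v)⁻¹ else 0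
noncomputable def BT (k : ℕ) (s v : ℝ) : ℝ :=
  if (k : ℝ) + 1 ≤ v then F2 (cc k v) (zz s v) / (2 * v) + 1 / 2 * gg k s v else 0

lemma one_le_of (k : ℕ) (v : ℝ) (h : (k : ℝ) + 1 ≤ v) : 1 ≤ v := by
  linarith [(Nat.cast_nonneg k : (0:ℝ) ≤ k)]

lemma WW_nonneg (k : ℕ) (s v : ℝ) (hv : 1 ≤ v) : 0 ≤ WW k s v := by
  unfold WW F0
  have := Phi_nonneg (-zz s v)
  have := cc_nonneg k v hv
  positivity

lemma WT_nonneg (k : ℕ) (s v : ℝ) : 0 ≤ WT k s v := by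
  unfold WT; split_ifs with h
  · exact WW_nonneg k s v (one_le_of k v h)
  · exact le_rfl

lemma WT_le (k : ℕ) (s v : ℝ) : |WT k s v| ≤ 1 + 2 * MM k := by
  have hM := MM_pos k
  unfold WT; split_ifs with h
  · have h1 := one_le_of k v h
    exact (F0_bound _ _ (cc_nonneg k v h1)).trans (by linarith [cc_le' k v h1])
  · rw [abs_zero]; linarith

lemma AT_le (k : ℕ) (s v : ℝ) : |AT k s v| ≤ 1 + 6 * MM k := by
  have hM := MM_pos k
  unfold AT; split_ifs with h
  · have h1 := one_le_of k v h
    have h2 := abs_mul_le (F1_bound (cc k v) (zz s v) (cc_nonneg k v h1))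
      (b := (√v)⁻¹) (d := 1) (by rw [abs_of_pos (rho_pos v h1)]; exact rho_le v h1)
    exact h2.trans (by linarith [cc_le' k v h1])
  · rw [abs_zero]; linarith

lemma BT_le (k : ℕ) (s v : ℝ) : |BT k s v| ≤ 3 + 7 * MM k := by
  have hM := MM_pos k
  unfold BT; split_ifs with h
  · have h1 := one_le_of k v h
    have h2 : |F2 (cc k v) (zz s v) / (2 * v)| ≤ 3 + 6 * MM k := by
      rw [abs_div, abs_of_pos (by linarith : 0 < 2 * v), div_le_iff₀ (by linarith)]
      have := F2_bound (cc k v) (zz s v) (cc_nonneg k v h1)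
      have := cc_le' k v h1
      nlinarith
    have h3 : |1 / 2 * gg k s v| ≤ MM k := by
      have := gg_nonneg k s v h1
      rw [abs_of_nonneg (by positivity)]
      linarith [gg_le k s v h1]
    exact (abs_add_le _ _).trans (by linarith)
  · rw [abs_zero]; linarith

lemma Phi_meas : Measurable stdNormalCDF :=
  (continuous_iff_continuousAt.2 fun x => (Phi_deriv x).continuousAt).measurable

lemma meas_set (k : ℕ) : MeasurableSet {x : ℝ × ℝ | (k : ℝ) + 1 ≤ x.2} :=
  measurableSet_le measurable_const measurable_snd

lemma WT_meas (k : ℕ) : Measurable (fun x : ℝ × ℝ => WT k x.1 x.2) := by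
  have := Phi_meas
  unfold WT
  refine Measurable.ite (meas_set k) ?_ measurable_const
  unfold WW F0 cc zz bet
  fun_prop

lemma AT_meas (k : ℕ) : Measurable (fun x : ℝ × ℝ => AT k x.1 x.2) := by
  unfold AT
  refine Measurable.ite (meas_set k) ?_ measurable_const
  unfold F1 cc zz bet
  fun_prop

lemma BT_meas (k : ℕ) : Measurable (fun x : ℝ × ℝ => BT k x.1 x.2) := by
  unfold BT
  refine Measurable.ite (meas_set k) ?_ measurable_const
  unfold gg F2 cc zz bet
  fun_prop

lemma star (k : ℕ) (p : ℝ) (hp : 1 ≤ p) (hk : 2 * p ≤ (k : ℝ) + 3) :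
    ∃ C : ℝ, 0 < C ∧ ∀ s x v q : ℝ, 0 ≤ q →
      WT k (s + x) v ≤ WT k s (v + q) + x * AT k s v + (x ^ 2 - q) * BT k s v
        + C * (|x| ^ (2 * p) + q ^ p) := by
  obtain ⟨C1, h1, hs⟩ := space k p hp hk
  obtain ⟨C2, h2, ht⟩ := time k p hp hk
  refine ⟨C1 + C2, by positivity, ?_⟩
  intro s x v q hq
  have hx0 : 0 ≤ |x| ^ (2 * p) := by positivity
  have hq0 : 0 ≤ q ^ p := by positivity
  have e1 : 0 ≤ C1 * |x| ^ (2 * p) := by positivity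
  have e2 : 0 ≤ C1 * q ^ p := by positivity
  have e3 : 0 ≤ C2 * |x| ^ (2 * p) := by positivity
  have e4 : 0 ≤ C2 * q ^ p := by positivity
  by_cases h : (k : ℝ) + 1 ≤ v
  · have h' : (k : ℝ) + 1 ≤ v + q := by linarith
    have a1 := hs v s x (one_le_of k v h)
    have a2 := ht v s q h hq
    rw [gain_eq] at a2
    simp only [WT, AT, BT, if_pos h, if_pos h']
    linarith
  · have := WT_nonneg k s (v + q)
    have e : WT k (s + x) v = 0 := by simp only [WT, if_neg h]
    rw [e]
    simp only [AT, BT, if_neg h]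
    linarith

lemma one_le_WT (k : ℕ) (s v : ℝ) (hs : s ≤ 0) (h1 : (k : ℝ) + 1 ≤ v) (h2 : v ≤ (k : ℝ) + 3) :
    1 ≤ WT k s v := by
  have hv := one_le_of k v h1
  have hρ := rho_pos v hv
  simp only [WT, if_pos h1, WW, F0]
  have hz : 0 ≤ -zz s v := by unfold zz; nlinarith
  have := Phi_tail (-zz s v) hz
  rw [neg_sq] at this
  have hc : 1 ≤ cc k v := by
    unfold cc
    have b := bet_le k v hv
    have hM := MM_pos k
    have hs : √v ≤ MM k := by
      rw [Real.sqrt_le_iff]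
      refine ⟨hM.le, ?_⟩
      unfold MM
      nlinarith [(Nat.cast_nonneg k : (0:ℝ) ≤ k)]
    have hsp : 0 < √v := Real.sqrt_pos.2 (by linarith)
    rw [← div_eq_mul_inv, le_div_iff₀ hsp]
    nlinarith
  have := Real.exp_pos (-zz s v ^ 2 / 2)
  nlinarith

lemma WT_start (k : ℕ) (s v : ℝ) (hv : 1 ≤ v) :
    WT k s v ≤ stdNormalCDF (-zz s v) + 2 * MM k * (√v)⁻¹ := by
  have h1 := cc_le k v hv
  have h2 := exp_le_one' (zz s v)
  have h3 := cc_nonneg k v hv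
  have h4 := Phi_nonneg (-zz s v)
  have hρ := rho_pos v hv
  have hM := MM_pos k
  unfold WT; split_ifs
  · simp only [WW, F0]
    nlinarith
  · positivity

noncomputable def PP (l u : ℝ) : ℝ := min (Real.exp (l * u)) 1
noncomputable def BQ (l e u q : ℝ) : ℝ :=
  if 1 ≤ Real.exp (l * u) ∨ 1 < l * q then 0 else Real.exp (l * u) * (l * e - l)

lemma PP_nonneg (l u : ℝ) : 0 ≤ PP l u := le_min (Real.exp_pos _).le zero_le_one
lemma PP_le (l u : ℝ) : PP l u ≤ 1 := min_le_right _ _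
lemma PP_le' (l u : ℝ) : PP l u ≤ Real.exp (l * u) := min_le_left _ _

lemma PP_meas (l : ℝ) : Measurable (PP l) := by
  unfold PP; fun_prop

lemma BQ_meas (l e : ℝ) : Measurable (fun x : ℝ × ℝ => BQ l e x.1 x.2) := by
  unfold BQ
  refine Measurable.ite ?_ measurable_const (by fun_prop)
  have h1 : Measurable (fun x : ℝ × ℝ => Real.exp (l * x.1)) := by fun_prop
  have h2 : Measurable (fun x : ℝ × ℝ => l * x.2) := by fun_prop
  exact (measurableSet_le measurable_const h1).union (measurableSet_lt measurable_const h2)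

lemma BQ_le (l e u q : ℝ) (hl : 0 ≤ l) (hl1 : l ≤ 1) (he : 0 ≤ e) (he1 : e ≤ 1) :
    |BQ l e u q| ≤ 1 := by
  unfold BQ; split_ifs with h
  · simp
  · push Not at h
    have h2 : |l * e - l| ≤ 1 := by rw [abs_le]; constructor <;> nlinarith
    have := abs_mul_le (a := Real.exp (l * u)) (c := 1)
      (by rw [abs_of_pos (Real.exp_pos _)]; exact h.1.le) h2
    linarith

lemma exp_aux (a b t : ℝ) (ha : 0 ≤ a) (hb1 : b ≤ 1) (h1 : -a ≤ t) (h2 : t ≤ b) (hb : 0 ≤ b) :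
    Real.exp t ≤ 1 + t + min (a ^ 2) a + min (b ^ 2) b := by
  have ma : 0 ≤ min (a ^ 2) a := le_min (by positivity) ha
  have mb : 0 ≤ min (b ^ 2) b := le_min (by positivity) hb
  rcases le_total (-1) t with h | h
  · have ht : |t| ≤ 1 := abs_le.2 ⟨h, h2.trans hb1⟩
    have := (abs_le.1 (Real.abs_exp_sub_one_sub_id_le ht)).2
    rcases le_total 0 t with h0 | h0
    · have : t ^ 2 ≤ min (b ^ 2) b := le_min (by nlinarith) (by nlinarith)
      linarith
    · have : t ^ 2 ≤ min (a ^ 2) a := le_min (by nlinarith) (by nlinarith)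
      linarith
  · have : Real.exp t ≤ 1 := by rw [Real.exp_le_one_iff]; linarith
    have : -t ≤ min (a ^ 2) a := le_min (by nlinarith) (by nlinarith)
    linarith

lemma E_aux (p a y : ℝ) (hp : 1 < p) (ha : 0 < a) (hy : 0 ≤ y) :
    min ((a ^ (p - 1) * y) ^ 2) (a ^ (p - 1) * y) ≤ a ^ p * a ^ (p - 1) * y + y ^ p := by
  have hl : 0 < a ^ (p - 1) := by positivity
  have e : a ^ p = a * a ^ (p - 1) := by
    rw [Real.rpow_sub_one ha.ne']; field_simp
  have hyp : 0 ≤ y ^ p := by positivity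
  rcases le_total y a with h | h
  · refine (min_le_left _ _).trans ?_
    rw [e]
    have : (a ^ (p - 1) * y) ^ 2 = a ^ (p - 1) * a ^ (p - 1) * y * y := by ring
    rw [this]
    have : a ^ (p - 1) * a ^ (p - 1) * y * y ≤ a ^ (p - 1) * a ^ (p - 1) * y * a := by gcongr
    linarith
  · refine (min_le_right _ _).trans ?_
    have hy0 : 0 < y := ha.trans_le h
    have e2 : y ^ p = y ^ (p - 1) * y := by
      rw [Real.rpow_sub_one hy0.ne']; field_simp
    have : a ^ (p - 1) * y ≤ y ^ (p - 1) * y := by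
      gcongr
    have : 0 ≤ a ^ p * a ^ (p - 1) * y := by positivity
    linarith

lemma psi_step (p a u x q : ℝ) (hp : 1 < p) (ha : 0 < a) (ha1 : a ≤ 1) (he : a ^ p ≤ 1 / 2)
    (hq : 0 ≤ q) :
    PP (a ^ (p - 1)) (u - x ^ 2 + (1 - 2 * a ^ p) * q) ≤ PP (a ^ (p - 1)) u
      + (x ^ 2 - q) * BQ (a ^ (p - 1)) (a ^ p) u q + (|x| ^ (2 * p) + q ^ p) := by
  have hl : 0 < a ^ (p - 1) := by positivity
  have hl1 : a ^ (p - 1) ≤ 1 := Real.rpow_le_one ha.le ha1 (by linarith)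
  have he0 : 0 < a ^ p := by positivity
  have E1 := E_aux p a (x ^ 2) hp ha (sq_nonneg x)
  have E2 := E_aux p a q hp ha hq
  have ex : (x ^ 2) ^ p = |x| ^ (2 * p) := by
    rw [← sq_abs, ← Real.rpow_natCast, ← Real.rpow_mul (abs_nonneg x)]; norm_num
  rw [ex] at E1
  have hx0 : 0 ≤ |x| ^ (2 * p) := by positivity
  have hq0 : 0 ≤ q ^ p := by positivity
  set l := a ^ (p - 1) with hlam
  set e := a ^ p with hee
  have L1 := PP_le l (u - x ^ 2 + (1 - 2 * e) * q)
  unfold BQ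
  split_ifs with h
  · rcases h with h | h
    · have : PP l u = 1 := min_eq_right h
      rw [this]; linarith
    · have : 1 ≤ q := by nlinarith
      have : 1 ≤ q ^ p := Real.one_le_rpow this (by linarith)
      have := PP_nonneg l u
      linarith
  · push Not at h
    have eY : PP l u = Real.exp (l * u) := min_eq_left h.1.le
    rw [eY]
    refine (PP_le' _ _).trans ?_
    have e1 : l * (u - x ^ 2 + (1 - 2 * e) * q) = l * u + (- (l * x ^ 2) + l * (1 - 2 * e) * q) := by
      ring
    rw [e1, Real.exp_add]
    have hlq : 0 ≤ l * q := by positivity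
    have h12 : 0 ≤ 1 - 2 * e := by linarith
    have k1 := exp_aux (l * x ^ 2) (l * q) (- (l * x ^ 2) + l * (1 - 2 * e) * q) (by positivity) h.2
      (by have : 0 ≤ l * (1 - 2 * e) * q := by positivity
          linarith)
      (by have : 0 ≤ l * x ^ 2 := by positivity
          nlinarith) hlq
    have Y0 := Real.exp_pos (l * u)
    set Y := Real.exp (l * u)
    have k2 : Real.exp (- (l * x ^ 2) + l * (1 - 2 * e) * q) ≤
        1 + (x ^ 2 - q) * (l * e - l) + (|x| ^ (2 * p) + q ^ p) := by linarith
    have k3 := mul_le_mul_of_nonneg_left k2 Y0.le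
    have k4 : Y * (|x| ^ (2 * p) + q ^ p) ≤ 1 * (|x| ^ (2 * p) + q ^ p) := by
      have := h.1.le
      gcongr
    linarith

lemma psi_start (p : ℝ) (hp : 1 < p) : ∃ C : ℝ, 0 < C ∧ ∀ a u : ℝ, 0 < a → a ≤ 1 →
    u ≤ - (1 / a ^ p) → PP (a ^ (p - 1)) u ≤ C * a ^ p := by
  obtain ⟨m, hm⟩ := exists_nat_ge p
  refine ⟨m.factorial, by positivity, ?_⟩
  intro a u ha ha1 hu
  refine (PP_le' _ _).trans ?_
  have hl : 0 < a ^ (p - 1) := by positivity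
  have e : a ^ p = a * a ^ (p - 1) := by
    rw [Real.rpow_sub_one ha.ne']; field_simp
  have h1 : a ^ (p - 1) * u ≤ - a⁻¹ := by
    calc _ ≤ a ^ (p - 1) * -(1 / a ^ p) := by gcongr
      _ = _ := by rw [e]; field_simp
  have h2 : Real.exp (a ^ (p - 1) * u) ≤ Real.exp (- a⁻¹) := Real.exp_le_exp.2 h1
  have h3 := Real.pow_div_factorial_le_exp (a⁻¹) (by positivity) m
  refine h2.trans ?_
  rw [Real.exp_neg]
  have h4 : (Real.exp a⁻¹)⁻¹ ≤ ((a⁻¹) ^ m / m.factorial)⁻¹ := by gcongr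
  refine h4.trans ?_
  have h5 : ((a⁻¹) ^ m / (m.factorial : ℝ))⁻¹ = m.factorial * a ^ m := by
    rw [inv_div, inv_pow]; field_simp
  rw [h5]
  gcongr
  rw [← Real.rpow_natCast]
  exact Real.rpow_le_rpow_of_exponent_ge ha ha1 hm

section mart
variable {Ω : Type} {mΩ : MeasurableSpace Ω}

/-- nonnegative version of the conditional second moment -/
noncomputable def qq (μ : Measure Ω) (m : MeasurableSpace Ω) (X : Ω → ℝ) (ω : Ω) : ℝ :=
  max ((μ[fun ω' => (X ω') ^ 2 | m]) ω) 0

lemma qq_nonneg (μ : Measure Ω) (m : MeasurableSpace Ω) (X : Ω → ℝ) (ω : Ω) : 0 ≤ qq μ m X ω :=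
  le_max_right _ _

lemma qq_ae (μ : Measure Ω) (m : MeasurableSpace Ω) (X : Ω → ℝ) :
    qq μ m X =ᵐ[μ] μ[fun ω' => (X ω') ^ 2 | m] := by
  have : 0 ≤ᵐ[μ] μ[fun ω' => (X ω') ^ 2 | m] := condExp_nonneg (ae_of_all _ fun ω => sq_nonneg _)
  filter_upwards [this] with ω h
  exact max_eq_left h

lemma qq_meas (μ : Measure Ω) (m : MeasurableSpace Ω) (X : Ω → ℝ) : Measurable[m] (qq μ m X) :=
  (stronglyMeasurable_condExp.measurable).max measurable_const

lemma abs_rpow_eq (x p : ℝ) : ‖x ^ 2‖ ^ p = |x| ^ (2 * p) := by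
  rw [norm_pow, Real.norm_eq_abs, ← Real.rpow_natCast, ← Real.rpow_mul (abs_nonneg x)]; norm_num

lemma sq_int (μ : Measure Ω) [IsProbabilityMeasure μ] (X : Ω → ℝ) (p : ℝ) (hp : 1 < p)
    (hX : AEStronglyMeasurable X μ) (h : Integrable (fun ω => |X ω| ^ (2 * p)) μ) :
    Integrable (fun ω => X ω ^ 2) μ := by
  refine ((integrable_const (1:ℝ)).add h).mono' (hX.pow 2) (ae_of_all _ fun ω => ?_)
  simp only [Pi.add_apply, ← abs_rpow_eq]
  set y := ‖X ω ^ 2‖ with hy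
  have h0 : 0 ≤ y := norm_nonneg _
  rcases le_total y 1 with h1 | h1
  · have : 0 ≤ y ^ p := by positivity
    linarith
  · have : y ≤ y ^ p := by
      nth_rewrite 1 [← Real.rpow_one y]
      exact Real.rpow_le_rpow_of_exponent_le h1 hp.le
    linarith

lemma qq_pow (μ : Measure Ω) [IsProbabilityMeasure μ] (m : MeasurableSpace Ω) (hm : m ≤ mΩ)
    (X : Ω → ℝ) (p : ℝ) (hp : 1 < p)
    (h : Integrable (fun ω => |X ω| ^ (2 * p)) μ) :
    Integrable (fun ω => qq μ m X ω ^ p) μ ∧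
    ∫ ω, qq μ m X ω ^ p ∂μ ≤ ∫ ω, |X ω| ^ (2 * p) ∂μ := by
  have h' : Integrable (fun ω => ‖X ω ^ 2‖ ^ p) μ := by simpa only [abs_rpow_eq] using h
  have hle : ∀ᵐ ω ∂μ, qq μ m X ω ^ p ≤ (μ[fun ω => ‖X ω ^ 2‖ ^ p | m]) ω := by
    filter_upwards [Integrable.norm_condExp_rpow_le (m := m) hp.le h', qq_ae μ m X] with ω h1 h2
    have h3 := qq_nonneg μ m X ω
    rw [← h2, Real.norm_eq_abs, abs_of_nonneg h3] at h1
    exact h1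
  have hmeas : AEStronglyMeasurable[mΩ] (fun ω => qq μ m X ω ^ p) μ :=
    (((qq_meas μ m X).mono hm le_rfl).pow_const p).aestronglyMeasurable
  have hqInt : Integrable (fun ω => qq μ m X ω ^ p) μ := by
    refine (integrable_condExp (m := m) (f := fun ω => ‖X ω ^ 2‖ ^ p)).mono' hmeas ?_
    filter_upwards [hle] with ω h1
    have h3 := qq_nonneg μ m X ω
    rw [Real.norm_eq_abs, abs_of_nonneg (by positivity)]
    exact h1
  refine ⟨hqInt, (integral_mono_ae hqInt integrable_condExp hle).trans ?_⟩
  rw [integral_condExp hm]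
  simp only [abs_rpow_eq]; exact le_rfl

lemma one_step (μ : Measure Ω) [IsProbabilityMeasure μ] (m : MeasurableSpace Ω) (hm : m ≤ mΩ)
    (X A B : Ω → ℝ) (p C KA KB : ℝ) (hp : 1 < p) (hC : 0 ≤ C)
    (hXi : Integrable X μ) (hX0 : μ[X | m] =ᵐ[μ] (0 : Ω → ℝ))
    (hXp : Integrable (fun ω => |X ω| ^ (2 * p)) μ)
    (hA : Measurable[m] A) (hB : Measurable[m] B) (hKA : ∀ ω, |A ω| ≤ KA) (hKB : ∀ ω, |B ω| ≤ KB) :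
    Integrable (fun ω => X ω * A ω + (X ω ^ 2 - qq μ m X ω) * B ω
      + C * (|X ω| ^ (2 * p) + qq μ m X ω ^ p)) μ ∧
    ∫ ω, (X ω * A ω + (X ω ^ 2 - qq μ m X ω) * B ω
      + C * (|X ω| ^ (2 * p) + qq μ m X ω ^ p)) ∂μ ≤ 2 * C * ∫ ω, |X ω| ^ (2 * p) ∂μ := by
  have hX2 := sq_int μ X p hp hXi.1 hXp
  obtain ⟨hq1, hq2⟩ := qq_pow μ m hm X p hp hXp
  have hqi : Integrable (qq μ m X) μ := integrable_condExp.congr (qq_ae μ m X).symm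
  have hD : Integrable (fun ω => X ω ^ 2 - qq μ m X ω) μ := hX2.sub hqi
  have gen : ∀ (D E : Ω → ℝ) (K : ℝ), Integrable D μ → μ[D | m] =ᵐ[μ] (0 : Ω → ℝ) →
      Measurable[m] E → (∀ ω, |E ω| ≤ K) →
      Integrable (fun ω => D ω * E ω) μ ∧ ∫ ω, D ω * E ω ∂μ = 0 := by
    intro D E K hD h0 hE hK
    have hi : Integrable (fun ω => E ω * D ω) μ :=
      hD.bdd_mul (c := K) (hE.mono hm le_rfl).aestronglyMeasurable (ae_of_all _ hK)
    have hi' : Integrable (fun ω => D ω * E ω) μ := by simpa only [mul_comm] using hi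
    refine ⟨hi', ?_⟩
    have h1 : ∫ ω, D ω * E ω ∂μ = ∫ ω, (E * D) ω ∂μ :=
      integral_congr_ae (ae_of_all _ fun ω => by simp [mul_comm])
    rw [h1, ← integral_condExp hm]
    have h2 := condExp_mul_of_stronglyMeasurable_left (μ := μ) hE.stronglyMeasurable hi hD
    have h3 : μ[E * D | m] =ᵐ[μ] 0 := by
      filter_upwards [h2, h0] with ω a b
      rw [a]; simp [b]
    rw [integral_congr_ae h3]; simp
  have hD0 : μ[fun ω => X ω ^ 2 - qq μ m X ω | m] =ᵐ[μ] (0 : Ω → ℝ) := by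
    have h1 := condExp_sub (m := m) hX2 hqi
    have h2 : μ[qq μ m X | m] = qq μ m X :=
      condExp_of_stronglyMeasurable hm (qq_meas μ m X).stronglyMeasurable hqi
    filter_upwards [h1, qq_ae μ m X] with ω a b
    have a' : (μ[fun ω => X ω ^ 2 - qq μ m X ω | m]) ω = _ := a
    rw [a', Pi.sub_apply, h2, b]; simp
  obtain ⟨g1, g2⟩ := gen X A KA hXi hX0 hA hKA
  obtain ⟨g3, g4⟩ := gen _ B KB hD hD0 hB hKB
  have g5 := (hXp.add hq1).const_mul C
  refine ⟨(g1.add g3).add g5, ?_⟩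
  have e1 := integral_add (g1.add g3) g5
  have e2 := integral_add g1 g3
  have e3 := integral_add hXp hq1
  have e4 := integral_const_mul (μ := μ) C (fun ω => |X ω| ^ (2 * p) + qq μ m X ω ^ p)
  simp only [Pi.add_apply] at e1 e2 e3 e4
  rw [e1, e2, e4, e3, g2, g4]
  nlinarith

lemma tele (μ : Measure Ω) [IsProbabilityMeasure μ] (ℱ : Filtration ℕ mΩ) (n : ℕ)
    (X A B H : ℕ → Ω → ℝ) (p C KA KB : ℝ) (hp : 1 < p) (hC : 0 ≤ C)
    (hXi : ∀ i, Integrable (X i) μ)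
    (hX0 : ∀ i ∈ Finset.Icc 1 n, μ[X i | ℱ (i - 1)] =ᵐ[μ] (0 : Ω → ℝ))
    (hXp : ∀ i ∈ Finset.Icc 1 n, Integrable (fun ω => |X i ω| ^ (2 * p)) μ)
    (hA : ∀ i, Measurable[ℱ (i - 1)] (A i)) (hB : ∀ i, Measurable[ℱ (i - 1)] (B i))
    (hKA : ∀ i ω, |A i ω| ≤ KA) (hKB : ∀ i ω, |B i ω| ≤ KB)
    (hH : ∀ i, Integrable (H i) μ)
    (hstep : ∀ i ∈ Finset.Icc 1 n, ∀ ω, H i ω ≤ H (i - 1) ω + (X i ω * A i ω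
      + (X i ω ^ 2 - qq μ (ℱ (i - 1)) (X i) ω) * B i ω
      + C * (|X i ω| ^ (2 * p) + qq μ (ℱ (i - 1)) (X i) ω ^ p))) :
    ∫ ω, H n ω ∂μ ≤ ∫ ω, H 0 ω ∂μ + 2 * C * ∑ i ∈ Finset.Icc 1 n, ∫ ω, |X i ω| ^ (2 * p) ∂μ := by
  have key : ∀ j, j ≤ n → ∫ ω, H j ω ∂μ ≤ ∫ ω, H 0 ω ∂μ
      + 2 * C * ∑ i ∈ Finset.Icc 1 j, ∫ ω, |X i ω| ^ (2 * p) ∂μ := by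
    intro j
    induction j with
    | zero => intro _; simp
    | succ j ih =>
      intro hj
      have hmem : j + 1 ∈ Finset.Icc 1 n := Finset.mem_Icc.2 ⟨by omega, hj⟩
      obtain ⟨o1, o2⟩ := one_step μ (ℱ (j + 1 - 1)) (ℱ.le _) (X (j + 1)) (A (j + 1)) (B (j + 1))
        p C KA KB hp hC (hXi _) (hX0 _ hmem) (hXp _ hmem) (hA _) (hB _) (hKA _) (hKB _)
      have h1 := integral_mono (hH (j + 1)) ((hH (j + 1 - 1)).add o1) (hstep _ hmem)
      have h2 := integral_add (hH (j + 1 - 1)) o1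
      simp only [Pi.add_apply] at h1
      rw [h2] at h1
      rw [Finset.sum_Icc_succ_top (by omega)]
      have := ih (by omega)
      have e : j + 1 - 1 = j := by omega
      simp only [e] at h1 o2
      linarith
  exact key n le_rfl

end mart

lemma cover (k : ℕ) (p l ε x S CV QV t1 t2 : ℝ) (hp : 1 < p) (hl : 0 < l) (hε : 0 < ε)
    (hε1 : ε ≤ 1 / 8) (ht1 : 0 ≤ t1) (ht2 : 0 ≤ t2) (ht : t1 + t2 ≤ 1) (hx : x ≤ 0)
    (hS : S ≤ x * √(t1 * CV + t2 * QV + (1 - t1 - t2))) :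
    1 ≤ |CV - 1| ^ p * (ε ^ (2 * p))⁻¹
      + WT k (S / ε - x * √(1 - 4 * ε) / ε) ((k : ℝ) + 2 + 1 / ε ^ 2 - CV / ε ^ 2)
      + PP l ((-2 / ε + 1 - 2 * ε) - QV / ε ^ 2 + (1 - 2 * ε) * CV / ε ^ 2) := by
  have hW := WT_nonneg k (S / ε - x * √(1 - 4 * ε) / ε) ((k : ℝ) + 2 + 1 / ε ^ 2 - CV / ε ^ 2)
  have hP := PP_nonneg l ((-2 / ε + 1 - 2 * ε) - QV / ε ^ 2 + (1 - 2 * ε) * CV / ε ^ 2)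
  have hA : 0 ≤ |CV - 1| ^ p * (ε ^ (2 * p))⁻¹ := by positivity
  rcases lt_or_ge (ε ^ 2) |CV - 1| with h | h
  · have h1 : ε ^ (2 * p) ≤ |CV - 1| ^ p := by
      rw [Real.rpow_mul hε.le]
      have : ε ^ (2:ℝ) = ε ^ 2 := by norm_num
      rw [this]
      exact Real.rpow_le_rpow (by positivity) h.le (by linarith)
    have h2 : 1 ≤ |CV - 1| ^ p * (ε ^ (2 * p))⁻¹ := by
      rw [← div_eq_mul_inv, le_div_iff₀ (by positivity)]; linarith
    linarith
  · obtain ⟨c1, c2⟩ := abs_le.1 h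
    have hε2 : 0 < ε ^ 2 := by positivity
    rcases lt_or_ge QV (1 - 4 * ε) with hq | hq
    · have hu : 0 ≤ (-2 / ε + 1 - 2 * ε) - QV / ε ^ 2 + (1 - 2 * ε) * CV / ε ^ 2 := by
        have e : (-2 / ε + 1 - 2 * ε) - QV / ε ^ 2 + (1 - 2 * ε) * CV / ε ^ 2
          = (-2 * ε + ε ^ 2 - 2 * ε ^ 3 - QV + (1 - 2 * ε) * CV) / ε ^ 2 := by
          field_simp
        rw [e]
        apply div_nonneg _ hε2.le
        nlinarith
      have : PP l ((-2 / ε + 1 - 2 * ε) - QV / ε ^ 2 + (1 - 2 * ε) * CV / ε ^ 2) = 1 := by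
        apply min_eq_right
        rw [Real.one_le_exp_iff]; positivity
      linarith
    · have hc : 1 - 4 * ε ≤ CV := by nlinarith
      have hV : 1 - 4 * ε ≤ t1 * CV + t2 * QV + (1 - t1 - t2) := by
        have a1 := mul_le_mul_of_nonneg_left hc ht1
        have a2 := mul_le_mul_of_nonneg_left hq ht2
        have a3 : 0 ≤ (1 - t1 - t2) * ε := mul_nonneg (by linarith) hε.le
        nlinarith
      have h1 : S ≤ x * √(1 - 4 * ε) :=
        hS.trans (mul_le_mul_of_nonpos_left (Real.sqrt_le_sqrt hV) hx)
      have h2 : S / ε - x * √(1 - 4 * ε) / ε ≤ 0 := by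
        rw [← sub_div]; exact div_nonpos_of_nonpos_of_nonneg (by linarith) hε.le
      have e : (k : ℝ) + 2 + 1 / ε ^ 2 - CV / ε ^ 2 = (k : ℝ) + 2 - (CV - 1) / ε ^ 2 := by ring
      have h3 : (CV - 1) / ε ^ 2 ≤ 1 := by rw [div_le_one hε2]; exact c2
      have h4 : -1 ≤ (CV - 1) / ε ^ 2 := by rw [le_div_iff₀ hε2]; linarith
      have := one_le_WT k (S / ε - x * √(1 - 4 * ε) / ε) ((k : ℝ) + 2 + 1 / ε ^ 2 - CV / ε ^ 2) h2
        (by rw [e]; linarith) (by rw [e]; linarith)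
      linarith

lemma scale_rpow (p ε x q : ℝ) (hε : 0 < ε) (hq : 0 ≤ q) :
    |x / ε| ^ (2 * p) + (q / ε ^ 2) ^ p = (ε ^ (2 * p))⁻¹ * (|x| ^ (2 * p) + q ^ p) := by
  have h2 : (ε ^ 2) ^ p = ε ^ (2 * p) := by
    rw [← Real.rpow_natCast, ← Real.rpow_mul hε.le]; norm_num
  rw [abs_div, abs_of_pos hε, Real.div_rpow (abs_nonneg x) hε.le, Real.div_rpow hq (by positivity),
    h2]
  ring

lemma start_bound (k : ℕ) (ε x : ℝ) (hε : 0 < ε) (hε1 : ε ≤ 1 / 8) (hx : x ≤ 0) :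
    WT k (0 / ε - x * √(1 - 4 * ε) / ε) ((k : ℝ) + 2 + 1 / ε ^ 2 - 0 / ε ^ 2)
      ≤ stdNormalCDF x + (8 + 2 * ((k : ℝ) + 2) + 2 * MM k) * ε := by
  set v := (k : ℝ) + 2 + 1 / ε ^ 2 - 0 / ε ^ 2 with hv
  have hk : (0:ℝ) ≤ k := Nat.cast_nonneg k
  have hM := MM_pos k
  have hv' : v = (k : ℝ) + 2 + 1 / ε ^ 2 := by rw [hv]; ring
  have hv1 : 1 ≤ v := by
    rw [hv']
    have : 0 ≤ 1 / ε ^ 2 := by positivity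
    linarith
  refine (WT_start k _ v hv1).trans ?_
  have hεv : 1 / ε ≤ √v := by
    apply Real.le_sqrt_of_sq_le
    rw [hv', div_pow, one_pow]; linarith
  have hsv : 0 < √v := by positivity
  have hinv : (√v)⁻¹ ≤ ε := by
    rw [inv_le_comm₀ hsv hε, ← one_div]; exact hεv
  have h4 : 0 < 1 - 4 * ε := by linarith
  have h4s : 0 < √(1 - 4 * ε) := Real.sqrt_pos.2 h4
  set ρ := √(1 - 4 * ε) / ε * (√v)⁻¹ with hρ
  have hρ0 : 0 < ρ := by positivity
  have hρ1 : ρ ≤ 1 := by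
    have : √(1 - 4 * ε) ≤ 1 := Real.sqrt_le_iff.2 ⟨by norm_num, by linarith⟩
    have h5 : √(1 - 4 * ε) / ε ≤ √v := (div_le_div_of_nonneg_right this hε.le).trans hεv
    rw [hρ, ← div_eq_mul_inv, div_le_one hsv]; exact h5
  have ez : -zz (0 / ε - x * √(1 - 4 * ε) / ε) v = x * ρ := by
    unfold zz; rw [hρ]; ring
  rw [ez]
  have P := Phi_scale x ρ hx hρ0 hρ1
  have hρ2 : ρ ^ 2 = (1 - 4 * ε) / (1 + ((k : ℝ) + 2) * ε ^ 2) := by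
    rw [hρ, mul_pow, rho_sq v hv1, div_pow, Real.sq_sqrt h4.le, hv']
    field_simp
    ring
  have h6 : 1 / ρ ≤ 1 / ρ ^ 2 := by
    apply one_div_le_one_div_of_le (by positivity)
    nlinarith
  have h7 : 1 / ρ ^ 2 ≤ 1 + (8 + 2 * ((k : ℝ) + 2)) * ε := by
    rw [hρ2, one_div_div, div_le_iff₀ h4]
    nlinarith [mul_nonneg hk hε.le, mul_nonneg (mul_nonneg hk hε.le) hε.le, mul_pos hε hε,
      mul_nonneg (mul_nonneg hk hε.le) (by linarith : 0 ≤ 1 / 8 - ε)]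
  have h8 : 2 * MM k * (√v)⁻¹ ≤ 2 * MM k * ε := by gcongr
  linarith

section final
variable {Ω : Type} {mΩ : MeasurableSpace Ω}

/-- partial sums of the conditional variances -/
noncomputable def TT (μ : Measure Ω) (ℱ : Filtration ℕ mΩ) (X : ℕ → Ω → ℝ) (i : ℕ) (ω : Ω) : ℝ :=
  ∑ j ∈ Finset.Icc 1 i, qq μ (ℱ (j - 1)) (X j) ω

lemma TT_meas (μ : Measure Ω) (ℱ : Filtration ℕ mΩ) (X : ℕ → Ω → ℝ) (i : ℕ) :
    Measurable[ℱ (i - 1)] (TT μ ℱ X i) := by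
  unfold TT
  refine Finset.measurable_fun_sum _ fun j hj => ?_
  have hj' := (Finset.mem_Icc.1 hj).2
  exact (qq_meas μ (ℱ (j - 1)) (X j)).mono (ℱ.mono (by omega)) le_rfl

lemma sum_meas (ℱ : Filtration ℕ mΩ) (X : ℕ → Ω → ℝ)
    (hX : ∀ i, StronglyMeasurable[ℱ i] (X i)) (f : ℝ → ℝ) (hf : Measurable f) (i : ℕ) :
    Measurable[ℱ i] (fun ω => ∑ j ∈ Finset.Icc 1 i, f (X j ω)) := by
  refine Finset.measurable_fun_sum _ fun j hj => ?_
  have hj' := (Finset.mem_Icc.1 hj).2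
  exact hf.comp ((hX j).measurable.mono (ℱ.mono hj') le_rfl)

lemma icc_step (f : ℕ → ℝ) (i n : ℕ) (hi : i ∈ Finset.Icc 1 n) :
    ∑ j ∈ Finset.Icc 1 i, f j = ∑ j ∈ Finset.Icc 1 (i - 1), f j + f i := by
  obtain ⟨h1, -⟩ := Finset.mem_Icc.1 hi
  obtain ⟨j, rfl⟩ : ∃ j, i = j + 1 := ⟨i - 1, by omega⟩
  rw [Finset.sum_Icc_succ_top (by omega)]; simp

lemma bdd_int (μ : Measure Ω) [IsProbabilityMeasure μ] (f : Ω → ℝ) (hf : Measurable f) (K : ℝ)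
    (hK : ∀ ω, |f ω| ≤ K) : Integrable f μ :=
  Integrable.of_bound hf.aestronglyMeasurable K (ae_of_all _ hK)

lemma partW (k : ℕ) (p : ℝ) (hp : 1 < p) (hk : 2 * p ≤ (k : ℝ) + 3) : ∃ C : ℝ, 0 < C ∧
    ∀ (Ω : Type) (mΩ : MeasurableSpace Ω) (μ : Measure Ω), IsProbabilityMeasure μ →
    ∀ (ℱ : Filtration ℕ mΩ) (n : ℕ) (X : ℕ → Ω → ℝ) (_ : ∀ i, StronglyMeasurable[ℱ i] (X i))
    (_ : ∀ i, Integrable (X i) μ)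
    (_ : ∀ i ∈ Finset.Icc 1 n, μ[X i | ℱ (i - 1)] =ᵐ[μ] (0 : Ω → ℝ))
    (_ : ∀ i ∈ Finset.Icc 1 n, Integrable (fun ω => |X i ω| ^ (2 * p)) μ)
    (ε y c : ℝ), 0 < ε →
    Integrable (fun ω => WT k ((∑ j ∈ Finset.Icc 1 n, X j ω) / ε - y) (c - TT μ ℱ X n ω / ε ^ 2)) μ ∧
    ∫ ω, WT k ((∑ j ∈ Finset.Icc 1 n, X j ω) / ε - y) (c - TT μ ℱ X n ω / ε ^ 2) ∂μ ≤
      WT k (0 / ε - y) (c - 0 / ε ^ 2)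
      + 2 * (C * (ε ^ (2 * p))⁻¹) * ∑ i ∈ Finset.Icc 1 n, ∫ ω, |X i ω| ^ (2 * p) ∂μ := by
  obtain ⟨C, hC, hst⟩ := star k p hp.le hk
  refine ⟨C, hC, ?_⟩
  intro Ω mΩ μ hμ ℱ n X hX hXi hX0 hXp ε y c hε
  have hM := MM_pos k
  set S : ℕ → Ω → ℝ := fun i ω => ∑ j ∈ Finset.Icc 1 i, X j ω with hS
  have mS : ∀ i, Measurable[ℱ i] (S i) := fun i => sum_meas ℱ X hX id measurable_id i
  have ms : ∀ i, Measurable[ℱ i] (fun ω => S i ω / ε - y) := fun i =>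
    ((mS i).div_const ε).sub_const y
  have mv : ∀ i, Measurable[ℱ (i - 1)] (fun ω => c - TT μ ℱ X i ω / ε ^ 2) := fun i =>
    ((TT_meas μ ℱ X i).div_const _).const_sub c
  have hH : ∀ i, Integrable (fun ω => WT k (S i ω / ε - y) (c - TT μ ℱ X i ω / ε ^ 2)) μ := by
    intro i
    refine bdd_int μ _ ?_ (1 + 2 * MM k) fun ω => WT_le _ _ _
    exact (WT_meas k).comp (((ms i).mono (ℱ.le _) le_rfl).prodMk ((mv i).mono (ℱ.le _) le_rfl))
  refine ⟨hH n, ?_⟩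
  have T := tele μ ℱ n X (fun i ω => AT k (S (i - 1) ω / ε - y) (c - TT μ ℱ X i ω / ε ^ 2) / ε)
    (fun i ω => BT k (S (i - 1) ω / ε - y) (c - TT μ ℱ X i ω / ε ^ 2) / ε ^ 2)
    (fun i ω => WT k (S i ω / ε - y) (c - TT μ ℱ X i ω / ε ^ 2)) p (C * (ε ^ (2 * p))⁻¹)
    ((1 + 6 * MM k) / ε) ((3 + 7 * MM k) / ε ^ 2) hp (by positivity) hXi hX0 hXp
    (fun i => ((AT_meas k).comp ((ms (i - 1)).prodMk (mv i))).div_const ε)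
    (fun i => ((BT_meas k).comp ((ms (i - 1)).prodMk (mv i))).div_const _)
    (fun i ω => by
      rw [abs_div, abs_of_pos hε]; exact div_le_div_of_nonneg_right (AT_le _ _ _) hε.le)
    (fun i ω => by
      rw [abs_div, abs_of_pos (by positivity : 0 < ε ^ 2)]
      exact div_le_div_of_nonneg_right (BT_le _ _ _) (by positivity))
    hH (by
      intro i hi ω
      have hq := qq_nonneg μ (ℱ (i - 1)) (X i) ω
      have e1 : S i ω = S (i - 1) ω + X i ω := icc_step (fun j => X j ω) i n hi
      have e2 : TT μ ℱ X i ω = TT μ ℱ X (i - 1) ω + qq μ (ℱ (i - 1)) (X i) ω :=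
        icc_step (fun j => qq μ (ℱ (j - 1)) (X j) ω) i n hi
      have h := hst (S (i - 1) ω / ε - y) (X i ω / ε) (c - TT μ ℱ X i ω / ε ^ 2)
        (qq μ (ℱ (i - 1)) (X i) ω / ε ^ 2) (by positivity)
      rw [scale_rpow p ε _ _ hε hq] at h
      have e3 : S (i - 1) ω / ε - y + X i ω / ε = S i ω / ε - y := by rw [e1]; ring
      have e4 : c - TT μ ℱ X i ω / ε ^ 2 + qq μ (ℱ (i - 1)) (X i) ω / ε ^ 2
          = c - TT μ ℱ X (i - 1) ω / ε ^ 2 := by rw [e2]; ring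
      rw [e3, e4] at h
      refine h.trans (le_of_eq ?_)
      ring)
  refine T.trans (le_of_eq ?_)
  congr 1
  simp [hS, TT]

lemma partQ (p : ℝ) (hp : 1 < p) (μ : Measure Ω) [IsProbabilityMeasure μ]
    (ℱ : Filtration ℕ mΩ) (n : ℕ) (X : ℕ → Ω → ℝ) (hX : ∀ i, StronglyMeasurable[ℱ i] (X i))
    (hXi : ∀ i, Integrable (X i) μ)
    (hX0 : ∀ i ∈ Finset.Icc 1 n, μ[X i | ℱ (i - 1)] =ᵐ[μ] (0 : Ω → ℝ))
    (hXp : ∀ i ∈ Finset.Icc 1 n, Integrable (fun ω => |X i ω| ^ (2 * p)) μ)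
    (ε a c : ℝ) (ha : 0 < a) (ha1 : a ≤ 1) (hε : a ^ p = ε) (hε1 : ε ≤ 1 / 2) :
    Integrable (fun ω => PP (a ^ (p - 1)) (c - (∑ j ∈ Finset.Icc 1 n, X j ω ^ 2) / ε ^ 2
      + (1 - 2 * ε) * TT μ ℱ X n ω / ε ^ 2)) μ ∧
    ∫ ω, PP (a ^ (p - 1)) (c - (∑ j ∈ Finset.Icc 1 n, X j ω ^ 2) / ε ^ 2
      + (1 - 2 * ε) * TT μ ℱ X n ω / ε ^ 2) ∂μ ≤ PP (a ^ (p - 1)) c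
      + 2 * (ε ^ (2 * p))⁻¹ * ∑ i ∈ Finset.Icc 1 n, ∫ ω, |X i ω| ^ (2 * p) ∂μ := by
  have hε0 : 0 < ε := by rw [← hε]; positivity
  set l := a ^ (p - 1) with hl
  have hl0 : 0 < l := by positivity
  have hl1 : l ≤ 1 := Real.rpow_le_one ha.le ha1 (by linarith)
  set R : ℕ → Ω → ℝ := fun i ω => ∑ j ∈ Finset.Icc 1 i, X j ω ^ 2 with hR
  have mR : ∀ i, Measurable[ℱ i] (R i) := fun i =>
    sum_meas ℱ X hX (fun x => x ^ 2) (by fun_prop) i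
  have mT : ∀ i, Measurable[ℱ i] (TT μ ℱ X i) := fun i =>
    (TT_meas μ ℱ X i).mono (ℱ.mono (by omega)) le_rfl
  have mu : ∀ i, Measurable[ℱ i]
      (fun ω => c - R i ω / ε ^ 2 + (1 - 2 * ε) * TT μ ℱ X i ω / ε ^ 2) := fun i =>
    (((mR i).div_const _).const_sub c).add (((mT i).const_mul _).div_const _)
  have hH : ∀ i, Integrable (fun ω => PP l (c - R i ω / ε ^ 2
      + (1 - 2 * ε) * TT μ ℱ X i ω / ε ^ 2)) μ := by
    intro i
    refine bdd_int μ _ ?_ 1 fun ω => ?_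
    · exact (PP_meas l).comp ((mu i).mono (ℱ.le _) le_rfl)
    · rw [abs_of_nonneg (PP_nonneg _ _)]; exact PP_le _ _
  refine ⟨hH n, ?_⟩
  have T := tele μ ℱ n X (fun i ω => 0)
    (fun i ω => BQ l ε (c - R (i - 1) ω / ε ^ 2 + (1 - 2 * ε) * TT μ ℱ X (i - 1) ω / ε ^ 2)
      (qq μ (ℱ (i - 1)) (X i) ω / ε ^ 2) / ε ^ 2)
    (fun i ω => PP l (c - R i ω / ε ^ 2 + (1 - 2 * ε) * TT μ ℱ X i ω / ε ^ 2)) p ((ε ^ (2 * p))⁻¹)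
    0 (1 / ε ^ 2) hp (by positivity) hXi hX0 hXp
    (fun i => measurable_const)
    (fun i => ((BQ_meas l ε).comp ((mu (i - 1)).prodMk
      ((qq_meas μ (ℱ (i - 1)) (X i)).div_const _))).div_const _)
    (fun i ω => by simp)
    (fun i ω => by
      rw [abs_div, abs_of_pos (by positivity : 0 < ε ^ 2)]
      exact div_le_div_of_nonneg_right (BQ_le _ _ _ _ hl0.le hl1 hε0.le (by linarith))
        (by positivity))
    hH (by
      intro i hi ω
      have hq := qq_nonneg μ (ℱ (i - 1)) (X i) ω
      have e1 : R i ω = R (i - 1) ω + X i ω ^ 2 := icc_step (fun j => X j ω ^ 2) i n hi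
      have e2 : TT μ ℱ X i ω = TT μ ℱ X (i - 1) ω + qq μ (ℱ (i - 1)) (X i) ω :=
        icc_step (fun j => qq μ (ℱ (j - 1)) (X j) ω) i n hi
      have h := psi_step p a (c - R (i - 1) ω / ε ^ 2 + (1 - 2 * ε) * TT μ ℱ X (i - 1) ω / ε ^ 2)
        (X i ω / ε) (qq μ (ℱ (i - 1)) (X i) ω / ε ^ 2) hp ha ha1 (by rw [hε]; exact hε1)
        (by positivity)
      rw [scale_rpow p ε _ _ hε0 hq, ← hl, hε] at h
      have e3 : c - R (i - 1) ω / ε ^ 2 + (1 - 2 * ε) * TT μ ℱ X (i - 1) ω / ε ^ 2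
          - (X i ω / ε) ^ 2 + (1 - 2 * ε) * (qq μ (ℱ (i - 1)) (X i) ω / ε ^ 2)
          = c - R i ω / ε ^ 2 + (1 - 2 * ε) * TT μ ℱ X i ω / ε ^ 2 := by rw [e1, e2]; ring
      rw [e3] at h
      refine h.trans (le_of_eq ?_)
      ring)
  refine T.trans (le_of_eq ?_)
  congr 1
  simp [hR, TT]

end final

lemma cv_int {Ω : Type} {mΩ : MeasurableSpace Ω} (p : ℝ) (hp : 1 < p) (μ : Measure Ω)
    [IsProbabilityMeasure μ] (ℱ : Filtration ℕ mΩ) (n : ℕ) (X : ℕ → Ω → ℝ)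
    (hXp : ∀ i ∈ Finset.Icc 1 n, Integrable (fun ω => |X i ω| ^ (2 * p)) μ) :
    Integrable (fun ω => |TT μ ℱ X n ω - 1| ^ p) μ := by
  have hp0 : ENNReal.ofReal p ≠ 0 := by simp; linarith
  have htr : (ENNReal.ofReal p).toReal = p := ENNReal.toReal_ofReal (by linarith)
  have h1 : MemLp (TT μ ℱ X n) (ENNReal.ofReal p) μ := by
    unfold TT
    refine memLp_finsetSum _ fun i hi => ?_
    have hm : AEStronglyMeasurable (qq μ (ℱ (i - 1)) (X i)) μ :=
      ((qq_meas μ (ℱ (i - 1)) (X i)).mono (ℱ.le _) le_rfl).aestronglyMeasurable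
    rw [← integrable_norm_rpow_iff hm hp0 ENNReal.ofReal_ne_top, htr]
    refine (qq_pow μ (ℱ (i - 1)) (ℱ.le _) (X i) p hp (hXp i hi)).1.congr (ae_of_all _ fun ω => ?_)
    simp only [Real.norm_eq_abs, abs_of_nonneg (qq_nonneg μ (ℱ (i - 1)) (X i) ω)]
  have h2 := (h1.sub (memLp_const (1:ℝ))).integrable_norm_rpow hp0 ENNReal.ofReal_ne_top
  rw [htr] at h2
  exact h2

lemma main_eps (p : ℝ) (hp : 1 < p) : ∃ C : ℝ, 0 < C ∧
    ∀ (Ω : Type) (mΩ : MeasurableSpace Ω) (μ : Measure Ω), IsProbabilityMeasure μ →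
    ∀ (ℱ : Filtration ℕ mΩ) (n : ℕ) (X : ℕ → Ω → ℝ) (_ : ∀ i, StronglyMeasurable[ℱ i] (X i))
    (_ : ∀ i, Integrable (X i) μ)
    (_ : ∀ i ∈ Finset.Icc 1 n, μ[X i | ℱ (i - 1)] =ᵐ[μ] (0 : Ω → ℝ))
    (_ : ∀ i ∈ Finset.Icc 1 n, Integrable (fun ω => |X i ω| ^ (2 * p)) μ)
    (S QV CV : Ω → ℝ), (∀ ω, S ω = ∑ i ∈ Finset.Icc 1 n, X i ω) →
    (∀ ω, QV ω = ∑ i ∈ Finset.Icc 1 n, (X i ω) ^ 2) →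
    (∀ ω, CV ω = ∑ i ∈ Finset.Icc 1 n, (μ[fun ω' => (X i ω') ^ 2 | ℱ (i - 1)]) ω) →
    ∀ ε : ℝ, 0 < ε →
      (∑ i ∈ Finset.Icc 1 n, ∫ ω, |X i ω| ^ (2 * p) ∂μ) + (∫ ω, |CV ω - 1| ^ p ∂μ)
        ≤ ε ^ (2 * p + 1) →
    ∀ t1 t2 : ℝ, 0 ≤ t1 → 0 ≤ t2 → t1 + t2 ≤ 1 → ∀ x : ℝ, x ≤ 0 →
      (μ {ω | S ω ≤ x * √(t1 * CV ω + t2 * QV ω + (1 - t1 - t2))}).toReal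
        - stdNormalCDF x ≤ C * ε := by
  obtain ⟨k, hk0⟩ := exists_nat_ge (2 * p)
  have hk : 2 * p ≤ (k : ℝ) + 3 := by linarith
  obtain ⟨C1, hC1, hW⟩ := partW k p hp hk
  obtain ⟨C2, hC2, hQ⟩ := psi_start p hp
  have hM := MM_pos k
  refine ⟨8 + (1 + (8 + 2 * ((k : ℝ) + 2) + 2 * MM k) + 2 * C1 + C2 + 2), by positivity, ?_⟩
  intro Ω mΩ μ hμ ℱ n X hX hXi hX0 hXp S QV CV hS hQV hCV ε hε hN t1 t2 ht1 ht2 ht x hx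
  rcases lt_or_ge (1 / 8) ε with h8 | h8
  · have a1 := Phi_nonneg x
    have a2 : (μ {ω | S ω ≤ x * √(t1 * CV ω + t2 * QV ω + (1 - t1 - t2))}).toReal ≤ 1 := by
      exact measureReal_le_one
    have a3 : 0 ≤ (1 + (8 + 2 * ((k : ℝ) + 2) + 2 * MM k) + 2 * C1 + C2 + 2) * ε := by positivity
    linarith
  set a := ε ^ (1 / p) with ha
  have hp0 : 0 < p := by linarith
  have ha0 : 0 < a := by positivity
  have ha1 : a ≤ 1 := Real.rpow_le_one hε.le (by linarith) (by positivity)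
  have hap : a ^ p = ε := by
    rw [ha, ← Real.rpow_mul hε.le, one_div, inv_mul_cancel₀ hp0.ne', Real.rpow_one]
  have hCT : CV =ᵐ[μ] TT μ ℱ X n := by
    have : ∀ᵐ ω ∂μ, ∀ i ∈ Finset.Icc 1 n, qq μ (ℱ (i - 1)) (X i) ω
        = (μ[fun ω' => (X i ω') ^ 2 | ℱ (i - 1)]) ω :=
      (Finset.eventually_all _).2 fun i _ => qq_ae μ (ℱ (i - 1)) (X i)
    filter_upwards [this] with ω h
    rw [hCV]
    exact (Finset.sum_congr rfl h).symm
  set y := x * √(1 - 4 * ε) / ε with hy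
  set c := (k : ℝ) + 2 + 1 / ε ^ 2 with hc
  set l := a ^ (p - 1) with hl
  set u0 := -2 / ε + 1 - 2 * ε with hu0
  obtain ⟨w1, w2⟩ := hW Ω mΩ μ hμ ℱ n X hX hXi hX0 hXp ε y c hε
  obtain ⟨q1, q2⟩ := partQ p hp μ ℱ n X hX hXi hX0 hXp ε a u0 ha0 ha1 hap (by linarith)
  have c1 := (cv_int p hp μ ℱ n X hXp).mul_const ((ε ^ (2 * p))⁻¹)
  rw [← hl] at q1 q2
  set E := {ω | S ω ≤ x * √(t1 * CV ω + t2 * QV ω + (1 - t1 - t2))} with hE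
  have hmS : Measurable S := by
    have := (sum_meas ℱ X hX id measurable_id n).mono (ℱ.le _) le_rfl
    rwa [show S = fun ω => ∑ j ∈ Finset.Icc 1 n, id (X j ω) from funext hS]
  have hmQ : Measurable QV := by
    have := (sum_meas ℱ X hX (fun x => x ^ 2) (by fun_prop) n).mono (ℱ.le _) le_rfl
    rwa [show QV = fun ω => ∑ j ∈ Finset.Icc 1 n, (X j ω) ^ 2 from funext hQV]
  have hmC : Measurable CV := by
    rw [show CV = fun ω => ∑ i ∈ Finset.Icc 1 n, (μ[fun ω' => (X i ω') ^ 2 | ℱ (i - 1)]) ω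
      from funext hCV]
    refine Finset.measurable_fun_sum _ fun j hj => ?_
    exact stronglyMeasurable_condExp.measurable.mono (ℱ.le _) le_rfl
  have hmE : MeasurableSet E := measurableSet_le hmS (by fun_prop)
  have hcov : ∀ᵐ ω ∂μ, E.indicator (fun _ => (1:ℝ)) ω ≤
      (|TT μ ℱ X n ω - 1| ^ p * (ε ^ (2 * p))⁻¹
      + WT k ((∑ j ∈ Finset.Icc 1 n, X j ω) / ε - y) (c - TT μ ℱ X n ω / ε ^ 2))
      + PP l (u0 - (∑ j ∈ Finset.Icc 1 n, X j ω ^ 2) / ε ^ 2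
        + (1 - 2 * ε) * TT μ ℱ X n ω / ε ^ 2) := by
    filter_upwards [hCT] with ω hω
    by_cases hmem : ω ∈ E
    · rw [Set.indicator_of_mem hmem, ← hω, ← hS ω, ← hQV ω]
      exact cover k p l ε x (S ω) (CV ω) (QV ω) t1 t2 hp (by positivity) hε h8 ht1 ht2 ht hx hmem
    · rw [Set.indicator_of_notMem hmem]
      have b1 := WT_nonneg k ((∑ j ∈ Finset.Icc 1 n, X j ω) / ε - y) (c - TT μ ℱ X n ω / ε ^ 2)
      have b2 := PP_nonneg l (u0 - (∑ j ∈ Finset.Icc 1 n, X j ω ^ 2) / ε ^ 2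
        + (1 - 2 * ε) * TT μ ℱ X n ω / ε ^ 2)
      positivity
  have I := integral_mono_ae ((integrable_const (1:ℝ)).indicator hmE) ((c1.add w1).add q1) hcov
  have e1 := integral_add (c1.add w1) q1
  have e2 := integral_add c1 w1
  simp only [Pi.add_apply] at e1 e2 I
  rw [e1, e2, integral_mul_const, integral_indicator_const _ hmE] at I
  have e3 : ∫ ω, |TT μ ℱ X n ω - 1| ^ p ∂μ = ∫ ω, |CV ω - 1| ^ p ∂μ :=
    integral_congr_ae (by filter_upwards [hCT] with ω hω; rw [hω])
  rw [e3] at I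
  have e4 : μ.real E • (1:ℝ) = (μ E).toReal := by simp [Measure.real]
  rw [e4] at I
  have s1 := start_bound k ε x hε h8 hx
  rw [← hy, ← hc] at s1
  have s2 := hQ a u0 ha0 ha1 (by
    rw [hap, hu0]
    have : -2 / ε + 1 - 2 * ε + 1 / ε = (-1 + ε - 2 * ε ^ 2) / ε := by field_simp; ring
    have h3 : (-1 + ε - 2 * ε ^ 2) / ε ≤ 0 :=
      div_nonpos_of_nonpos_of_nonneg (by nlinarith) hε.le
    linarith)
  rw [hap, ← hl] at s2
  have n1 : 0 ≤ ∑ i ∈ Finset.Icc 1 n, ∫ ω, |X i ω| ^ (2 * p) ∂μ :=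
    Finset.sum_nonneg fun i _ => integral_nonneg fun ω => by positivity
  have n2 : 0 ≤ ∫ ω, |CV ω - 1| ^ p ∂μ := integral_nonneg fun ω => by positivity
  set A1 := ∑ i ∈ Finset.Icc 1 n, ∫ ω, |X i ω| ^ (2 * p) ∂μ
  set A2 := ∫ ω, |CV ω - 1| ^ p ∂μ
  have hE0 : 0 < ε ^ (2 * p) := by positivity
  have hpow : ε ^ (2 * p + 1) = ε ^ (2 * p) * ε := by rw [Real.rpow_add hε, Real.rpow_one]
  have m1 : (ε ^ (2 * p))⁻¹ * A1 ≤ ε := by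
    rw [inv_mul_le_iff₀ hE0, ← hpow]; linarith
  have m2 : A2 * (ε ^ (2 * p))⁻¹ ≤ ε := by
    rw [mul_comm, inv_mul_le_iff₀ hE0, ← hpow]; linarith
  have m3 : 2 * (C1 * (ε ^ (2 * p))⁻¹) * A1 ≤ 2 * C1 * ε := by
    have := mul_le_mul_of_nonneg_left m1 (by positivity : 0 ≤ 2 * C1)
    linarith
  linarith

end BE

theorem stmt4 (p : ℝ) (hp : 1 < p) :
    ∃ C : ℝ, 0 < C ∧
      ∀ (Ω : Type) (mΩ : MeasurableSpace Ω) (μ : Measure Ω),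
        IsProbabilityMeasure μ →
        ∀ (ℱ : Filtration ℕ mΩ), ℱ 0 = ⊥ →
        ∀ (n : ℕ) (X : ℕ → Ω → ℝ), X 0 = 0 →
        (∀ i, StronglyMeasurable[ℱ i] (X i)) →
        (∀ i, Integrable (X i) μ) →
        (∀ i ∈ Finset.Icc 1 n, μ[X i | ℱ (i - 1)] =ᵐ[μ] (0 : Ω → ℝ)) →
        ∀ (S : ℕ → Ω → ℝ), (∀ k ω, S k ω = ∑ i ∈ Finset.Icc 1 k, X i ω) →
        ∀ (QV CV : Ω → ℝ),
          (∀ ω, QV ω = ∑ i ∈ Finset.Icc 1 n, (X i ω) ^ 2) →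
          (∀ ω, CV ω = ∑ i ∈ Finset.Icc 1 n, (μ[fun ω' => (X i ω') ^ 2 | ℱ (i - 1)]) ω) →
        (∫ ω, (S n ω) ^ 2 ∂μ) = 1 →
        (∀ i ∈ Finset.Icc 1 n, Integrable (fun ω => |X i ω| ^ (2 * p)) μ) →
        ∀ (N : ℝ),
          N = (∑ i ∈ Finset.Icc 1 n, ∫ ω, |X i ω| ^ (2 * p) ∂μ) + (∫ ω, |CV ω - 1| ^ p ∂μ) →
      N ≤ 1 →
      ∀ t1 t2 : ℝ, 0 ≤ t1 → 0 ≤ t2 → t1 ≤ 1 → t2 ≤ 1 → t1 + t2 ≤ 1 →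
      ∀ x : ℝ, x ≤ 0 →
        (μ {ω | S n ω ≤ x * Real.sqrt (t1 * CV ω + t2 * QV ω + (1 - t1 - t2))}).toReal
          - stdNormalCDF x ≤ C * N ^ (1 / (2 * p + 1)) := by
  obtain ⟨C, hC, h⟩ := BE.main_eps p hp
  refine ⟨C, hC, ?_⟩
  intro Ω mΩ μ hμ ℱ _ n X _ hX hXi hX0 S hS QV CV hQV hCV _ hXp N hN _ t1 t2 ht1 ht2 _ _ ht x hx
  have key := fun ε hε hle => h Ω mΩ μ hμ ℱ n X hX hXi hX0 hXp (S n) QV CV (hS n) hQV hCV ε hε hle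
    t1 t2 ht1 ht2 ht x hx
  rw [← hN] at key
  have n1 : 0 ≤ ∑ i ∈ Finset.Icc 1 n, ∫ ω, |X i ω| ^ (2 * p) ∂μ :=
    Finset.sum_nonneg fun i _ => integral_nonneg fun ω => by positivity
  have n2 : 0 ≤ ∫ ω, |CV ω - 1| ^ p ∂μ := integral_nonneg fun ω => by positivity
  have hN0 : 0 ≤ N := by rw [hN]; positivity
  have hp1 : 0 < 2 * p + 1 := by linarith
  rcases hN0.eq_or_lt with h0 | h0
  · rw [← h0, Real.zero_rpow (by positivity), mul_zero]
    refine le_of_forall_pos_le_add fun δ hδ => ?_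
    have := key (δ / C) (by positivity) (by rw [← h0]; positivity)
    rw [mul_div_cancel₀ _ hC.ne'] at this
    linarith
  · refine key (N ^ (1 / (2 * p + 1))) (by positivity) (le_of_eq ?_)
    rw [← Real.rpow_mul hN0, one_div, inv_mul_cancel₀ hp1.ne', Real.rpow_one]
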